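/- Let X be a finite set and let A be an abelian subgroup of Sym(X). Then A is the automorphism group of some k-coloured graph on X for some k ≥ 1 if and only if A is the automorphism group of some 4-coloured graph on X (that is, A ∈ GR if and only if A ∈ GR(4)). -/

import Mathlib

/-- The orbit of a point `x` under a set `G` of permutations of `X`. -/
def orbitOf {X : Type*} (G : Set (Equiv.Perm X)) (x : X) : Set X :=
  {y | ∃ a ∈ G, a x = y}

/-- A permutation `σ` is 2-orbit-compatible with `G` if for every pair of orbits
`O` and `Q` of `G` there is an element of `G` agreeing with `σ` on `O ∪ Q`. -/
def TwoOrbitCompatible {X : Type*} (G : Set (Equiv.Perm X)) (σ : Equiv.Perm X) : Prop :=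
  ∀ x y : X, ∃ a ∈ G, ∀ z ∈ orbitOf G x ∪ orbitOf G y, σ z = a z

/-- A subgroup `A ≤ Sym(X)` is 2-orbit-closed if every permutation that is
2-orbit-compatible with `A` belongs to `A`. -/
def TwoOrbitClosed {X : Type*} (A : Subgroup (Equiv.Perm X)) : Prop :=
  ∀ σ : Equiv.Perm X, TwoOrbitCompatible (A : Set (Equiv.Perm X)) σ → σ ∈ A

/-- `A` is precisely the automorphism group of the `k`-coloured graph `γ` on `X`. -/
def IsColGraphAutGroup {X : Type*} {k : ℕ} (γ : Sym2 X → Fin k)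
    (A : Subgroup (Equiv.Perm X)) : Prop :=
  ∀ σ : Equiv.Perm X, σ ∈ A ↔ ∀ x y : X, x ≠ y → γ s(σ x, σ y) = γ s(x, y)

/-- `A ∈ GR`: `A` is the automorphism group of some coloured graph on `X`. -/
def InGR {X : Type*} (A : Subgroup (Equiv.Perm X)) : Prop :=
  ∃ k : ℕ, 1 ≤ k ∧ ∃ γ : Sym2 X → Fin k, IsColGraphAutGroup γ A

/-- `A ∈ GR(4)`: `A` is the automorphism group of some 4-coloured graph on `X`. -/
def InGR4 {X : Type*} (A : Subgroup (Equiv.Perm X)) : Prop :=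
  ∃ γ : Sym2 X → Fin 4, IsColGraphAutGroup γ A

/-!
A permutation that agrees on every pair of points with some element of `A`, up to the order of the
two points, is an automorphism of every graph with automorphism group `A`. So the permutations of
this kind already belong to `A`, and `A` is not trivial on two points, where the swap is one of
them. Conversely, these two properties suffice for a graph with four colours.

Let `K i` be the stabilizer of the `i`-th orbit, a copy of `A ⧸ K i`. Inside the orbit, colour
`s(x, y)` by an even function of `y - x` which forces automorphisms to be `x ↦ ±x + t`; between the
orbits `i` and `j`, colour by cosets of `K i ⊔ K j`. A coset pattern `{0, d}` distinguishes the two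
signs as soon as `d + d ∉ K i ⊔ K j` and there is a third coset to be left blank. If there are only
three cosets, all three colours are needed. Apart from such pairs `i, j`, which need a sign only
along a maximal matching, a colour can be added to the pattern modulo `3`, and with three orbits
these shifts identify the orbits. With at most two orbits, the internal colours identify them.

The groups `ℤ₂²` and `ℤ₃²` are too small for such an internal colouring, but they have one that is
rigid as soon as one pair `±h` is distinguished, and another orbit `j` with `K i ⊔ K j ≠ ⊤` provides
it. For `ℤ₃²` the orbit `j` exists, since otherwise the reflection `x ↦ -x` of that orbit alone
would preserve all the orbits on pairs. An orbit with group `ℤ₂²` and without `j` is instead made a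
complete graph in three colours, which can be glued to the graph on the other orbits.
-/

namespace ColouredGraph

section SignedPairs

variable {B C : Type*} [AddCommGroup B] [AddCommGroup C]

/-- The pair `±a`. -/
def signedPair (a : B) : Set B := {x | x = a ∨ x = -a}

theorem neg_mem_signedPair {a x : B} (h : x ∈ signedPair a) : -x ∈ signedPair a := by
  rcases h with rfl | rfl
  · exact Or.inr rfl
  · exact Or.inl (neg_neg a)

theorem ncard_signedPair_le (a : B) : (signedPair a).ncard ≤ 2 :=
  (Set.ncard_insert_le a {-a}).trans (by rw [Set.ncard_singleton])

/-- Maps of the form `x ↦ ±x + t`, which preserve every even colouring of differences. -/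
def IsSignedTranslation (φ : B → B) : Prop :=
  (∃ t, ∀ x, φ x = x + t) ∨ ∃ t, ∀ x, φ x = -x + t

/-- An even colouring of a group by `0`, `1`, `2`, `3`, read as a Cayley colour graph, whose
automorphisms that also preserve the relation `x - y ∈ E` are exactly the maps `x ↦ ±x + t`.
Colour `3` is connected, and it is strictly more frequent than colour `2`. -/
structure IsRigidColouring (E : Set B) (c : B → Fin 4) : Prop where
  zero : c 0 = 0
  even : ∀ x, c (-x) = c x
  closure_eq_top : AddSubgroup.closure {x | c x = 3} = ⊤
  ncard_lt : Nontrivial B → {x | c x = 2}.ncard < {x | c x = 3}.ncard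
  rigid : ∀ φ : B → B, φ.Bijective → (∀ x y, c (φ x - φ y) = c (x - y)) →
    (∀ x y, x - y ∈ E → φ x - φ y ∈ E) → IsSignedTranslation φ

theorem IsRigidColouring.comp_addEquiv {E : Set B} {c : B → Fin 4} (hc : IsRigidColouring E c)
    (f : C ≃+ B) : IsRigidColouring (f ⁻¹' E) (c ∘ f) where
  zero := by simp [hc.zero]
  even x := by simp [hc.even]
  closure_eq_top := by
    have himage : f.symm '' {x | c x = 3} = {x | (c ∘ f) x = 3} :=
      f.symm.toEquiv.image_eq_preimage_symm _
    rw [← himage]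
    have := AddMonoidHom.map_closure (f.symm : B →+ C) {x | c x = 3}
    rw [hc.closure_eq_top, AddSubgroup.map_top_of_surjective _ f.symm.surjective] at this
    exact this.symm
  ncard_lt hC := by
    have hcard (d : Fin 4) : {x | (c ∘ f) x = d}.ncard = {x | c x = d}.ncard :=
      Set.ncard_preimage_of_injective_subset_range (s := {x | c x = d}) f.injective
        (by simp [f.surjective.range_eq])
    rw [hcard, hcard]
    exact hc.ncard_lt f.injective.nontrivial
  rigid φ hφ hcol hE := by
    have key := hc.rigid (f ∘ φ ∘ f.symm)
      (f.bijective.comp (hφ.comp f.symm.bijective))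
      (fun x y => by simpa using hcol (f.symm x) (f.symm y))
      (fun x y h => by simpa using hE (f.symm x) (f.symm y) (by simpa using h))
    refine key.imp ?_ ?_ <;> rintro ⟨t, ht⟩ <;> refine ⟨f.symm t, fun x => f.injective ?_⟩ <;>
      simpa using ht (f x)

end SignedPairs

section Axes

variable {r : ℕ} {n : Fin r → ℕ}

theorem eq_add_or_eq_sub_of_step {m : ℕ} [NeZero m] {h : ZMod m → ZMod m}
    (hinj : h.Injective) (hstep : ∀ t, h (t + 1) - h t ∈ signedPair (1 : ZMod m)) :
    (∀ t, h t = h 0 + t) ∨ ∀ t, h t = h 0 - t := by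
  have hconst (t : ZMod m) : h (t + 1 + 1) - h (t + 1) = h (t + 1) - h t := by
    have hback : h (t + 1 + 1) = h t → (2 : ZMod m) = 0 := fun e => by
      simpa [add_assoc, one_add_one_eq_two] using hinj e
    rcases hstep t with h1 | h1 <;> rcases hstep (t + 1) with h2 | h2
    · rw [h1, h2]
    · linear_combination h2 - h1 - hback (by linear_combination h1 + h2)
    · linear_combination h2 - h1 + hback (by linear_combination h1 + h2)
    · rw [h1, h2]
  have hlinear (k : ℕ) : h (k + 1) - h k = h 1 - h 0 ∧ h k = h 0 + k * (h 1 - h 0) := by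
    induction k with
    | zero => simp
    | succ k ih =>
      push_cast
      refine ⟨(hconst k).trans ih.1, ?_⟩
      linear_combination ih.1 + ih.2
  refine (hstep 0).imp (fun hd t => ?_) (fun hd t => ?_) <;>
    obtain ⟨k, rfl⟩ := ZMod.natCast_zmod_surjective t <;>
    rw [zero_add] at hd <;> rw [(hlinear k).2, hd] <;> ring

/-- The `i`-th standard generator of `∏ i, ℤ/n i`. -/
def axisGen (n : Fin r → ℕ) (i : Fin r) : (i : Fin r) → ZMod (n i) := Pi.single i 1

theorem axisGen_same (i : Fin r) : axisGen n i i = 1 := Pi.single_eq_same i 1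

theorem axisGen_of_ne {i k : Fin r} (h : k ≠ i) : axisGen n i k = 0 := Pi.single_eq_of_ne h 1

/-- The set of coordinates at which an element of `∏ i, ℤ/n i` does not vanish. -/
def coordSupport (x : (i : Fin r) → ZMod (n i)) : Set (Fin r) := {k | x k ≠ 0}

theorem coordSupport_neg (x : (i : Fin r) → ZMod (n i)) : coordSupport (-x) = coordSupport x := by
  ext k; simp [coordSupport]

theorem mem_of_forall_axisGen_mem [∀ i, NeZero (n i)]
    {H : AddSubgroup ((i : Fin r) → ZMod (n i))} {z : (i : Fin r) → ZMod (n i)}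
    (hz : ∀ j, z j ≠ 0 → axisGen n j ∈ H) : z ∈ H := by
  rw [← Finset.univ_sum_single z]
  refine sum_mem fun j _ => ?_
  by_cases hj : z j = 0
  · simp [hj]
  · have : Pi.single j (z j) = (z j).val • axisGen n j := by
      rw [axisGen, ← Pi.single_smul, nsmul_one, ZMod.natCast_zmod_val]
    exact this ▸ nsmul_mem (hz j hj) _

variable {φ : ((i : Fin r) → ZMod (n i)) → (i : Fin r) → ZMod (n i)}

theorem apply_add_eq_of_step [∀ i, NeZero (n i)]
    (hstep : ∀ k x, φ (x + axisGen n k) - φ x ∈ signedPair (axisGen n k))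
    {k : Fin r} (x z : (i : Fin r) → ZMod (n i)) (hz : z k = 0) : φ (x + z) k = φ x k := by
  let H : AddSubgroup ((i : Fin r) → ZMod (n i)) :=
    { carrier := {z | ∀ x, φ (x + z) k = φ x k}
      zero_mem' := fun x => by rw [add_zero]
      add_mem' := fun ha hb x => by rw [← add_assoc, hb, ha]
      neg_mem' := fun {z} hz x => by simpa using (hz (x + -z)).symm }
  refine mem_of_forall_axisGen_mem (H := H) (fun j hzj x => ?_) x
  have hj : j ≠ k := fun h => hzj (h ▸ hz)
  have hval : (φ (x + axisGen n j) - φ x) k = 0 := by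
    rcases hstep j x with h | h <;> rw [h] <;> simp [axisGen_of_ne hj.symm]
  rwa [Pi.sub_apply, sub_eq_zero] at hval

theorem exists_sign_of_step [∀ i, NeZero (n i)] (hinj : φ.Injective)
    (hstep : ∀ k x, φ (x + axisGen n k) - φ x ∈ signedPair (axisGen n k)) (k : Fin r) :
    ∃ ε : ℤˣ, ∀ x, φ x k = φ 0 k + ε • x k := by
  have hdep (x : (i : Fin r) → ZMod (n i)) (j : Fin r) : φ x j = φ (Pi.single j (x j)) j := by
    rw [← apply_add_eq_of_step hstep (Pi.single j (x j)) (x - Pi.single j (x j)) (by simp),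
      add_sub_cancel]
  have hline := eq_add_or_eq_sub_of_step (h := fun t => φ (Pi.single k t) k) ?_ ?_
  · rcases hline with h | h
    · exact ⟨1, fun x => by simpa only [hdep x k, Pi.single_zero, one_smul] using h (x k)⟩
    · refine ⟨-1, fun x => ?_⟩
      simpa only [hdep x k, Pi.single_zero, Units.neg_smul, one_smul, ← sub_eq_add_neg]
        using h (x k)
  · intro s t hst
    refine Pi.single_injective k (hinj (funext fun j => ?_))
    by_cases hj : j = k
    · subst hj
      exact hst
    · rw [hdep, hdep (Pi.single k t), Pi.single_eq_of_ne hj, Pi.single_eq_of_ne hj]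
  · intro t
    have := hstep k (Pi.single k t)
    rw [axisGen, ← Pi.single_add] at this
    refine this.imp (fun h => ?_) (fun h => ?_) <;>
      simpa using congrFun h k

theorem apply_sub_apply_zero_eq_of_sign {i j : Fin r} (hij : i ≠ j) {ε : ℤˣ}
    (hk : ∀ k, ∃ δ : ℤˣ, ∀ x, φ x k = φ 0 k + δ • x k)
    (hi : ∀ x, φ x i = φ 0 i + -ε • x i) (hj : ∀ x, φ x j = φ 0 j + ε • x j) :
    φ (axisGen n i + axisGen n j) - φ 0 = -ε • (axisGen n i - axisGen n j) := by
  funext k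
  by_cases hki : k = i
  · subst hki
    rw [Pi.sub_apply, hi, add_sub_cancel_left]
    simp [axisGen_same, axisGen_of_ne hij]
  · by_cases hkj : k = j
    · subst hkj
      rw [Pi.sub_apply, hj, add_sub_cancel_left]
      simp [axisGen_same, axisGen_of_ne hki]
    · obtain ⟨δ, hδ⟩ := hk k
      rw [Pi.sub_apply, hδ, add_sub_cancel_left]
      simp [axisGen_of_ne hki, axisGen_of_ne hkj]

theorem units_smul_eq_self_of_le_two {m : ℕ} [NeZero m] (hm : m ≤ 2) (ε : ℤˣ) (a : ZMod m) :
    ε • a = a := by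
  have h0 := NeZero.ne m
  interval_cases m
  · exact absurd rfl h0
  · exact Subsingleton.elim (α := ZMod 1) _ _
  · rcases Int.units_eq_one_or ε with rfl | rfl
    · exact one_smul _ a
    · rw [Units.neg_smul, one_smul, ZModModule.neg_eq_self]

/-- The signs on consecutive axes are coupled by the colours of `e_i ± e_{i+1}`; an axis of order
two carries no sign. -/
theorem isSignedTranslation_of_step {r : ℕ} {n : Fin (r + 1) → ℕ} [∀ i, NeZero (n i)]
    {D : Type*} {c : ((i : Fin (r + 1)) → ZMod (n i)) → D} (heven : ∀ x, c (-x) = c x)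
    (hcouple : ∀ i : Fin r, 2 < n i.castSucc →
      c (axisGen n i.castSucc + axisGen n i.succ) ≠ c (axisGen n i.castSucc - axisGen n i.succ))
    {φ : ((i : Fin (r + 1)) → ZMod (n i)) → (i : Fin (r + 1)) → ZMod (n i)} (hinj : φ.Injective)
    (hcol : ∀ x y, c (φ x - φ y) = c (x - y))
    (hstep : ∀ k x, φ (x + axisGen n k) - φ x ∈ signedPair (axisGen n k)) :
    IsSignedTranslation φ := by
  have hsign := exists_sign_of_step hinj hstep
  obtain ⟨ε, hε⟩ := hsign (Fin.last r)
  have hall (k : Fin (r + 1)) (x : (i : Fin (r + 1)) → ZMod (n i)) :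
      φ x k = φ 0 k + ε • x k := by
    revert x
    induction k using Fin.reverseInduction with
    | last => exact hε
    | cast i hi =>
      obtain ⟨δ, hδ⟩ := hsign i.castSucc
      by_cases htwo : 2 < n i.castSucc
      · suffices δ = ε from this ▸ hδ
        by_contra hne
        rw [← Ne, Int.units_ne_iff_eq_neg] at hne
        subst hne
        have hmix := apply_sub_apply_zero_eq_of_sign (Fin.castSucc_lt_succ.ne) hsign hδ hi
        refine hcouple i htwo ?_
        rw [← sub_zero (axisGen n i.castSucc + axisGen n i.succ), ← hcol, hmix]
        rcases Int.units_eq_one_or ε with rfl | rfl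
        · rw [Units.neg_smul, one_smul, heven]
        · rw [neg_neg, one_smul]
      · intro x
        rw [hδ, units_smul_eq_self_of_le_two (not_lt.1 htwo),
          units_smul_eq_self_of_le_two (not_lt.1 htwo)]
  rcases Int.units_eq_one_or ε with rfl | rfl
  · exact Or.inl ⟨φ 0, fun x => funext fun k => by simp [hall k x, add_comm]⟩
  · exact Or.inr ⟨φ 0, fun x => funext fun k => by simp [hall k x, add_comm]⟩

end Axes

section AxisColour

variable {r : ℕ} {n : Fin r → ℕ} {T : Set ((i : Fin r) → ZMod (n i))} {i j : Fin r}
  {u v x : (i : Fin r) → ZMod (n i)}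

variable (T) in
open Classical in
/-- The colouring of `∏ i, ℤ/n i` with colour `3` on the axes `±e_i`, colour `2` on a marker set
`T` that distinguishes the first axes, and colour `1` on `±(e_i + e_{i+1})`, which leads from
each axis to the next one. -/
noncomputable def axisColour (x : (i : Fin r) → ZMod (n i)) : Fin 4 :=
  if ∃ i, x ∈ signedPair (axisGen n i) then 3
  else if x ∈ T then 2
  else if ∃ i j : Fin r, (i : ℕ) + 1 = j ∧ x ∈ signedPair (axisGen n i + axisGen n j) then 1
  else 0

theorem axisColour_eq_three_iff : axisColour T x = 3 ↔ ∃ i, x ∈ signedPair (axisGen n i) := by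
  unfold axisColour
  split_ifs <;> simp_all

theorem mem_of_axisColour_eq_two (hx : axisColour T x = 2) : x ∈ T := by
  unfold axisColour at hx
  split_ifs at hx <;> simp_all

theorem axisColour_eq_two_of_mem (hx : axisColour T x ≠ 3) (hxT : x ∈ T) :
    axisColour T x = 2 := by
  rw [Ne, axisColour_eq_three_iff] at hx
  unfold axisColour
  rw [if_neg hx, if_pos hxT]

theorem exists_of_axisColour_eq_one (hx : axisColour T x = 1) :
    ∃ i j : Fin r, (i : ℕ) + 1 = j ∧ x ∈ signedPair (axisGen n i + axisGen n j) := by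
  unfold axisColour at hx
  split_ifs at hx <;> simp_all

theorem axisColour_neg (hT : ∀ x ∈ T, -x ∈ T) (x : (i : Fin r) → ZMod (n i)) :
    axisColour T (-x) = axisColour T x := by
  have hpair (a : (i : Fin r) → ZMod (n i)) : -x ∈ signedPair a ↔ x ∈ signedPair a :=
    ⟨fun h => by simpa using neg_mem_signedPair h, neg_mem_signedPair⟩
  have hmem : -x ∈ T ↔ x ∈ T := ⟨fun h => by simpa using hT _ h, hT x⟩
  classical
  exact if_congr (exists_congr fun i => hpair _) rfl (if_congr hmem rfl
    (if_congr (exists_congr fun i => exists_congr fun j => and_congr_right fun _ => hpair _)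
      rfl rfl))

theorem coordSupport_zero : coordSupport (0 : (i : Fin r) → ZMod (n i)) = ∅ := by
  ext
  simp [coordSupport]

theorem ne_of_val_succ_eq (h : (i : ℕ) + 1 = j) : i ≠ j := by
  rintro rfl
  omega

theorem coordSupport_sub_subset_of_mem_axis (hu : u ∈ signedPair (axisGen n i))
    (hv : v ∈ signedPair (axisGen n i)) : coordSupport (u - v) ⊆ {i} := by
  intro k hk
  by_contra hki
  have hki : k ≠ i := hki
  rcases hu with rfl | rfl <;> rcases hv with rfl | rfl <;>
    simp [coordSupport, axisGen_of_ne hki] at hk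

variable [∀ i, Fact (1 < n i)]

theorem coordSupport_of_mem_axis (hu : u ∈ signedPair (axisGen n i)) : coordSupport u = {i} := by
  ext k
  by_cases hk : k = i
  · subst hk
    rcases hu with rfl | rfl <;> simp [coordSupport, axisGen_same]
  · rcases hu with rfl | rfl <;> simp [coordSupport, axisGen_of_ne hk, hk]

theorem coordSupport_sub_of_mem_axis (hij : i ≠ j) (hu : u ∈ signedPair (axisGen n i))
    (hv : v ∈ signedPair (axisGen n j)) : coordSupport (u - v) = {i, j} := by
  have hu' := Set.ext_iff.1 (coordSupport_of_mem_axis hu)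
  have hv' := Set.ext_iff.1 (coordSupport_of_mem_axis hv)
  simp only [coordSupport, Set.mem_ofPred_eq, Set.mem_singleton_iff] at hu' hv'
  ext k
  by_cases hki : k = i
  · subst hki
    have hvk : v k = 0 := not_not.1 fun h => hij ((hv' k).1 h)
    simp [coordSupport, hvk, (hu' k).2 rfl]
  · have huk : u k = 0 := not_not.1 fun h => hki ((hu' k).1 h)
    simp [coordSupport, huk, hki, hv' k]

theorem coordSupport_of_mem_axis_add (hij : i ≠ j)
    (hx : x ∈ signedPair (axisGen n i + axisGen n j)) : coordSupport x = {i, j} := by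
  have hsub := coordSupport_sub_of_mem_axis (n := n) hij (Or.inl rfl) (Or.inr rfl)
  rw [sub_neg_eq_add] at hsub
  rcases hx with rfl | rfl
  · exact hsub
  · rw [coordSupport_neg, hsub]

theorem axisColour_ne_three_of_coordSupport (hij : i ≠ j) (hx : coordSupport x = {i, j}) :
    axisColour T x ≠ 3 := by
  intro h
  obtain ⟨k, hk⟩ := axisColour_eq_three_iff.1 h
  rw [coordSupport_of_mem_axis hk] at hx
  have hi : i ∈ ({k} : Set (Fin r)) := hx ▸ Or.inl rfl
  have hj : j ∈ ({k} : Set (Fin r)) := hx ▸ Or.inr rfl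
  exact hij (hi.trans hj.symm)

theorem axisColour_of_mem_axis_add (hij : (i : ℕ) + 1 = j) (hxT : x ∉ T)
    (hx : x ∈ signedPair (axisGen n i + axisGen n j)) : axisColour T x = 1 := by
  have hne := axisColour_ne_three_of_coordSupport (T := T) (ne_of_val_succ_eq hij)
    (coordSupport_of_mem_axis_add (ne_of_val_succ_eq hij) hx)
  rw [Ne, axisColour_eq_three_iff] at hne
  unfold axisColour
  rw [if_neg hne, if_neg hxT, if_pos ⟨i, j, hij, hx⟩]

theorem zero_notMem_axis_add (hij : i ≠ j) :
    0 ∉ signedPair (axisGen n i + axisGen n j) := fun h =>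
  (Set.insert_nonempty i {j}).ne_empty
    ((coordSupport_of_mem_axis_add hij h).symm.trans coordSupport_zero)

theorem axisColour_zero (hT : 0 ∉ T) : axisColour T (0 : (i : Fin r) → ZMod (n i)) = 0 := by
  unfold axisColour
  rw [if_neg, if_neg hT, if_neg]
  · rintro ⟨i, j, hij, h⟩
    exact zero_notMem_axis_add (ne_of_val_succ_eq hij) h
  · rintro ⟨i, h⟩
    exact (Set.singleton_nonempty i).ne_empty
      ((coordSupport_of_mem_axis h).symm.trans coordSupport_zero)

theorem axisGen_sub_notMem_axis_add (hij : i ≠ j) (hi : 2 < n i) (hj : 2 < n j) {k l : Fin r}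
    (hkl : k ≠ l) : axisGen n i - axisGen n j ∉ signedPair (axisGen n k + axisGen n l) := by
  intro hmem
  have hsupp := coordSupport_sub_of_mem_axis (n := n) hij (Or.inl rfl) (Or.inl rfl)
  rw [coordSupport_of_mem_axis_add hkl hmem] at hsupp
  have htwo {m : ℕ} (hm : 2 < m) : (1 : ZMod m) ≠ -1 := by
    have : Fact (2 < m) := ⟨hm⟩
    exact (ZMod.neg_one_ne_one (n := m)).symm
  have hsum : axisGen n k + axisGen n l = axisGen n i + axisGen n j := by
    rcases Set.pair_eq_pair_iff.1 hsupp with ⟨rfl, rfl⟩ | ⟨rfl, rfl⟩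
    · rfl
    · exact add_comm _ _
  rw [hsum] at hmem
  rcases hmem with hmem | hmem
  · refine htwo hj ?_
    simpa [axisGen_same, axisGen_of_ne hij.symm, eq_comm] using congrFun hmem j
  · refine htwo hi ?_
    simpa [axisGen_same, axisGen_of_ne hij] using congrFun hmem i

theorem axisColour_add_ne_axisColour_sub (hij : (i : ℕ) + 1 = j) (hi : 2 < n i) (hj : 2 < n j)
    (hT : axisGen n i - axisGen n j ∉ T) :
    axisColour T (axisGen n i + axisGen n j) ≠ axisColour T (axisGen n i - axisGen n j) := by
  have hne := ne_of_val_succ_eq hij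
  intro h
  have hadd : axisColour T (axisGen n i + axisGen n j) = 1 := by
    by_contra h1
    by_cases hmem : axisGen n i + axisGen n j ∈ T
    · rw [axisColour_eq_two_of_mem (axisColour_ne_three_of_coordSupport hne
        (coordSupport_of_mem_axis_add hne (Or.inl rfl))) hmem] at h
      exact hT (mem_of_axisColour_eq_two h.symm)
    · exact h1 (axisColour_of_mem_axis_add hij hmem (Or.inl rfl))
  obtain ⟨k, l, hkl, hmem⟩ := exists_of_axisColour_eq_one (h.symm.trans hadd)
  exact axisGen_sub_notMem_axis_add hne hi hj (ne_of_val_succ_eq hkl) hmem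

theorem isRigidColouring_of_subsingleton {B : Type*} [AddCommGroup B] [Subsingleton B]
    (E : Set B) : IsRigidColouring E fun _ => 0 where
  zero := rfl
  even _ := rfl
  closure_eq_top := Subsingleton.elim _ _
  ncard_lt h := (not_nontrivial B h).elim
  rigid _ _ _ _ := Or.inl ⟨0, fun _ => Subsingleton.elim _ _⟩

theorem isRigidColouring_axisColour {r : ℕ} {n : Fin (r + 1) → ℕ} [∀ i, Fact (1 < n i)]
    (hn : Monotone n) {E T : Set ((i : Fin (r + 1)) → ZMod (n i))} (hT : ∀ x ∈ T, -x ∈ T)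
    (hT0 : 0 ∉ T)
    (hTsub : ∀ i j : Fin (r + 1), (i : ℕ) + 1 = j → 2 < n i → 2 < n j →
      axisGen n i - axisGen n j ∉ T)
    (hcard : {x | axisColour T x = 2}.ncard < {x | axisColour T x = 3}.ncard)
    (haxis : ∀ ψ : ((i : Fin (r + 1)) → ZMod (n i)) → (i : Fin (r + 1)) → ZMod (n i),
      ψ.Injective → ψ 0 = 0 → (∀ x y, axisColour T (ψ x - ψ y) = axisColour T (x - y)) →
      Set.MapsTo ψ E E → ∀ k, Set.MapsTo ψ (signedPair (axisGen n k)) (signedPair (axisGen n k))) :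
    IsRigidColouring E (axisColour T) where
  zero := axisColour_zero hT0
  even := axisColour_neg hT
  closure_eq_top := by
    have (i : Fin (r + 1)) : NeZero (n i) := ⟨(zero_lt_one.trans Fact.out).ne'⟩
    refine (AddSubgroup.eq_top_iff' _).2 fun z => mem_of_forall_axisGen_mem fun j _ => ?_
    exact AddSubgroup.subset_closure (axisColour_eq_three_iff.2 ⟨j, Or.inl rfl⟩)
  ncard_lt _ := hcard
  rigid φ hφ hcol hE := by
    have (i : Fin (r + 1)) : NeZero (n i) := ⟨(zero_lt_one.trans Fact.out).ne'⟩
    refine isSignedTranslation_of_step (axisColour_neg hT) (fun i hi => ?_) hφ.1 hcol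
      fun k x => ?_
    · have hval : (i.castSucc : ℕ) + 1 = i.succ := by simp
      have hi' : 2 < n i.succ := hi.trans_le (hn Fin.castSucc_lt_succ.le)
      exact axisColour_add_ne_axisColour_sub hval hi hi' (hTsub _ _ hval hi hi')
    · refine haxis (fun z => φ (x + z) - φ x) (fun y z h => ?_) (by simp) (fun y z => ?_)
        (fun z hz => ?_) k (Or.inl rfl)
      · exact add_left_cancel (hφ.1 (sub_left_injective h))
      · rw [sub_sub_sub_cancel_right, hcol, add_sub_add_left_eq_sub]
      · exact hE _ _ (by rwa [add_sub_cancel_left])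

end AxisColour

section Recognition

variable {B D : Type*}

theorem mapsTo_diff_of_finite [Finite B] {ψ : B → B} (hψ : ψ.Injective) {P Q : Set B}
    (hP : Set.MapsTo ψ P P) (hQ : Set.MapsTo ψ Q Q) : Set.MapsTo ψ (P \ Q) (P \ Q) := by
  rintro u ⟨hu, huQ⟩
  refine ⟨hP hu, fun h => huQ ?_⟩
  have himage : ψ '' Q = Q :=
    Set.eq_of_subset_of_ncard_le hQ.image_subset (Set.ncard_image_of_injective Q hψ).ge
  obtain ⟨v, hv, hvu⟩ := himage.symm ▸ h
  exact hψ hvu ▸ hv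

theorem mapsTo_colour_neighbours [AddCommGroup B] {c : B → D} {ψ : B → B}
    (hcol : ∀ x y, c (ψ x - ψ y) = c (x - y)) {P Q : Set B} (hP : Set.MapsTo ψ P P)
    (hQ : Set.MapsTo ψ Q Q) (d : D) :
    Set.MapsTo ψ {u ∈ P | ∃ v ∈ Q, c (u - v) = d} {u ∈ P | ∃ v ∈ Q, c (u - v) = d} := by
  rintro u ⟨hu, v, hv, rfl⟩
  exact ⟨hP hu, ψ v, hQ hv, hcol u v⟩

section Axes

variable {r : ℕ} {n : Fin r → ℕ}
  {T : Set ((i : Fin r) → ZMod (n i))} {ψ : ((i : Fin r) → ZMod (n i)) → (i : Fin r) → ZMod (n i)}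

/-- The union of the axes `±e_i`. -/
def axes (n : Fin r → ℕ) : Set ((i : Fin r) → ZMod (n i)) :=
  {x | ∃ i, x ∈ signedPair (axisGen n i)}

theorem mapsTo_axes (h0 : ψ 0 = 0)
    (hcol : ∀ x y, axisColour T (ψ x - ψ y) = axisColour T (x - y)) :
    Set.MapsTo ψ (axes n) (axes n) := by
  intro u hu
  refine axisColour_eq_three_iff.1 (?_ : axisColour T (ψ u) = 3)
  rw [← sub_zero (ψ u), ← h0, hcol, sub_zero]
  exact axisColour_eq_three_iff.2 hu

variable [∀ i, Fact (1 < n i)] {i j k : Fin r} {u v : (i : Fin r) → ZMod (n i)}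

theorem eq_of_mem_axis (hi : u ∈ signedPair (axisGen n i)) (hj : u ∈ signedPair (axisGen n j)) :
    i = j :=
  Set.singleton_injective ((coordSupport_of_mem_axis hi).symm.trans (coordSupport_of_mem_axis hj))

theorem axes_diff_axis {n : Fin 2 → ℕ} [∀ i, Fact (1 < n i)] {i j : Fin 2} (hij : i ≠ j) :
    axes n \ signedPair (axisGen n i) = signedPair (axisGen n j) := by
  ext u
  constructor
  · rintro ⟨⟨k, hk⟩, hi⟩
    have hki : k ≠ i := fun h => hi (h ▸ hk)
    have : k = j := by omega
    exact this ▸ hk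
  · exact fun h => ⟨⟨j, h⟩, fun h' => hij (eq_of_mem_axis h' h)⟩

theorem exists_mem_axis_sub_mem (n : Fin r → ℕ) {u : (i : Fin r) → ZMod (n i)} (i j : Fin r)
    (hu : u ∈ signedPair (axisGen n i)) :
    ∃ v ∈ signedPair (axisGen n j), u - v ∈ signedPair (axisGen n i + axisGen n j) := by
  rcases hu with rfl | rfl
  · exact ⟨_, Or.inr rfl, Or.inl (sub_neg_eq_add _ _)⟩
  · exact ⟨_, Or.inl rfl, Or.inr (by abel)⟩

theorem consecutive_of_axisColour_eq_one (hu : u ∈ signedPair (axisGen n i))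
    (hv : v ∈ signedPair (axisGen n j)) (h : axisColour T (u - v) = 1) :
    ((i : ℕ) + 1 = j ∨ (j : ℕ) + 1 = i) ∧ u - v ∈ signedPair (axisGen n i + axisGen n j) := by
  obtain ⟨k, l, hkl, hmem⟩ := exists_of_axisColour_eq_one h
  have hne := ne_of_val_succ_eq hkl
  have hsupp := coordSupport_of_mem_axis_add hne hmem
  by_cases hij : i = j
  · subst hij
    have hsub := hsupp ▸ coordSupport_sub_subset_of_mem_axis hu hv
    exact (hne ((hsub (Or.inl rfl)).trans (hsub (Or.inr rfl)).symm)).elim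
  · rw [coordSupport_sub_of_mem_axis hij hu hv, Set.pair_eq_pair_iff] at hsupp
    rcases hsupp with ⟨rfl, rfl⟩ | ⟨rfl, rfl⟩
    · exact ⟨Or.inl hkl, hmem⟩
    · exact ⟨Or.inr hkl, by rwa [add_comm (axisGen n i)]⟩

theorem axis_or_eq_of_sub_mem_axis_add (hij : i ≠ j) {k l : Fin r}
    (hu : u ∈ signedPair (axisGen n k)) (hv : v ∈ signedPair (axisGen n l))
    (h : u - v ∈ signedPair (axisGen n i + axisGen n j)) : k = i ∨ k = j := by
  have hsupp := coordSupport_of_mem_axis_add hij h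
  by_cases hkl : k = l
  · subst hkl
    have hsub := hsupp ▸ coordSupport_sub_subset_of_mem_axis hu hv
    exact (hij ((hsub (Or.inl rfl)).trans (hsub (Or.inr rfl)).symm)).elim
  · rw [coordSupport_sub_of_mem_axis hkl hu hv] at hsupp
    exact (hsupp ▸ Or.inl rfl : k ∈ ({i, j} : Set (Fin r)))

end Axes

section RankAtLeastThree

variable {r : ℕ} {n : Fin (r + 3) → ℕ} [∀ i, Fact (1 < n i)]
  {ψ : ((i : Fin (r + 3)) → ZMod (n i)) → (i : Fin (r + 3)) → ZMod (n i)}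

variable (n) in
/-- The marker `±(e_0 + e_1)` of the first two axes, used when there is a third one. -/
def firstTwoMarker : Set ((i : Fin (r + 3)) → ZMod (n i)) :=
  signedPair (axisGen n 0 + axisGen n 1)

theorem axisColour_of_mem_firstTwoMarker {x : (i : Fin (r + 3)) → ZMod (n i)}
    (hx : x ∈ firstTwoMarker n) : axisColour (firstTwoMarker n) x = 2 :=
  axisColour_eq_two_of_mem (axisColour_ne_three_of_coordSupport (by simp)
    (coordSupport_of_mem_axis_add (by simp) hx)) hx

theorem setOf_firstTwoMarker_neighbour :
    {u ∈ axes n | ∃ v ∈ axes n, axisColour (firstTwoMarker n) (u - v) = 2} =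
      signedPair (axisGen n 0) ∪ signedPair (axisGen n 1) := by
  have h01 : (0 : Fin (r + 3)) ≠ 1 := by simp
  ext u
  constructor
  · rintro ⟨⟨k, hk⟩, v, ⟨l, hl⟩, h⟩
    rcases axis_or_eq_of_sub_mem_axis_add h01 hk hl (mem_of_axisColour_eq_two h) with rfl | rfl
    · exact Or.inl hk
    · exact Or.inr hk
  · rintro (hu | hu)
    · obtain ⟨v, hv, h⟩ := exists_mem_axis_sub_mem n 0 1 hu
      exact ⟨⟨0, hu⟩, v, ⟨1, hv⟩, axisColour_of_mem_firstTwoMarker h⟩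
    · obtain ⟨v, hv, h⟩ := exists_mem_axis_sub_mem n 1 0 hu
      exact ⟨⟨1, hu⟩, v, ⟨0, hv⟩,
        axisColour_of_mem_firstTwoMarker (by rwa [firstTwoMarker, add_comm (axisGen n 0)])⟩

theorem axisColour_firstTwoMarker_eq_one {i j : Fin (r + 3)} (hij : (i : ℕ) + 1 = j) (hi : 1 ≤ i)
    {x : (i : Fin (r + 3)) → ZMod (n i)} (hx : x ∈ signedPair (axisGen n i + axisGen n j)) :
    axisColour (firstTwoMarker n) x = 1 := by
  refine axisColour_of_mem_axis_add hij (fun h => ?_) hx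
  have h01 : (0 : Fin (r + 3)) ≠ 1 := by simp
  have hsupp := coordSupport_of_mem_axis_add h01 h
  rw [coordSupport_of_mem_axis_add (ne_of_val_succ_eq hij) hx] at hsupp
  have h0 : (0 : Fin (r + 3)) ∈ ({i, j} : Set (Fin (r + 3))) := hsupp ▸ Or.inl rfl
  rcases h0 with rfl | rfl
  · simp at hi
  · simp at hij

theorem setOf_firstTwo_colour_one_neighbour :
    {u ∈ signedPair (axisGen n 0) ∪ signedPair (axisGen n 1) |
      ∃ v ∈ axes n, axisColour (firstTwoMarker n) (u - v) = 1} = signedPair (axisGen n 1) := by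
  ext u
  constructor
  · rintro ⟨hu | hu, v, ⟨l, hl⟩, h⟩
    · obtain ⟨hl1, hmem⟩ := consecutive_of_axisColour_eq_one hu hl h
      have hl1 : l = 1 := Fin.ext (by simpa [eq_comm] using hl1)
      rw [hl1] at hmem
      rw [axisColour_of_mem_firstTwoMarker hmem] at h
      exact absurd h (by decide)
    · exact hu
  · intro hu
    obtain ⟨v, hv, h⟩ := exists_mem_axis_sub_mem n 1 2 hu
    have h12 : ((1 : Fin (r + 3)) : ℕ) + 1 = (2 : Fin (r + 3)) := rfl
    exact ⟨Or.inr hu, v, ⟨2, hv⟩, axisColour_firstTwoMarker_eq_one h12 le_rfl h⟩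

theorem setOf_colour_one_neighbour_diff {i j k : Fin (r + 3)} (hij : (i : ℕ) + 1 = j)
    (hjk : (j : ℕ) + 1 = k) :
    {u ∈ axes n | ∃ v ∈ signedPair (axisGen n j), axisColour (firstTwoMarker n) (u - v) = 1} \
      signedPair (axisGen n i) = signedPair (axisGen n k) := by
  ext u
  constructor
  · rintro ⟨⟨⟨l, hl⟩, v, hv, h⟩, hi⟩
    have hli : l ≠ i := fun h => hi (h ▸ hl)
    obtain ⟨hlj, -⟩ := consecutive_of_axisColour_eq_one hl hv h
    have : l = k := by omega
    exact this ▸ hl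
  · intro hu
    obtain ⟨v, hv, h⟩ := exists_mem_axis_sub_mem n k j hu
    rw [add_comm (axisGen n k)] at h
    have hj : 1 ≤ j := by rw [Fin.le_def, ← hij]; simp
    refine ⟨⟨⟨k, hu⟩, v, hv, axisColour_firstTwoMarker_eq_one hjk hj h⟩, fun hi => ?_⟩
    have := eq_of_mem_axis hi hu
    omega

theorem mapsTo_axis_of_firstTwoMarker (hψ : ψ.Injective) (h0 : ψ 0 = 0)
    (hcol : ∀ x y, axisColour (firstTwoMarker n) (ψ x - ψ y) =
      axisColour (firstTwoMarker n) (x - y)) (k : Fin (r + 3)) :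
    Set.MapsTo ψ (signedPair (axisGen n k)) (signedPair (axisGen n k)) := by
  have (i : Fin (r + 3)) : NeZero (n i) := ⟨(zero_lt_one.trans Fact.out).ne'⟩
  have hS := mapsTo_axes h0 hcol
  have h01 := setOf_firstTwoMarker_neighbour (n := n) ▸ mapsTo_colour_neighbours hcol hS hS 2
  have h1 := setOf_firstTwo_colour_one_neighbour (n := n) ▸ mapsTo_colour_neighbours hcol h01 hS 1
  obtain ⟨k, hk⟩ := k
  induction k using Nat.twoStepInduction with
  | zero =>
    have hdiff : (signedPair (axisGen n 0) ∪ signedPair (axisGen n 1)) \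
        signedPair (axisGen n 1) = signedPair (axisGen n 0) :=
      Set.union_sdiff_cancel_right fun u hu => by simpa using eq_of_mem_axis hu.1 hu.2
    exact hdiff ▸ mapsTo_diff_of_finite hψ h01 h1
  | one => exact h1
  | more k ih0 ih1 =>
    have hk1 := mapsTo_colour_neighbours hcol hS (ih1 (by omega)) 1
    have hk0 := mapsTo_diff_of_finite hψ hk1 (ih0 (by omega))
    rwa [setOf_colour_one_neighbour_diff (k := ⟨k + 2, hk⟩) rfl rfl] at hk0

theorem ncard_colour_two_lt_of_firstTwoMarker :
    {x | axisColour (firstTwoMarker n) x = 2}.ncard <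
      {x | axisColour (firstTwoMarker n) x = 3}.ncard := by
  have (i : Fin (r + 3)) : NeZero (n i) := ⟨(zero_lt_one.trans Fact.out).ne'⟩
  have hthree : 3 ≤ {x | axisColour (firstTwoMarker n) x = 3}.ncard := by
    have hinj : (axisGen n).Injective := fun i j h => eq_of_mem_axis (Or.inl rfl) (Or.inl h)
    calc 3 ≤ (Set.range (axisGen n)).ncard := by
          rw [← Nat.card_coe_set_eq, Nat.card_range_of_injective hinj, Nat.card_fin]
          omega
      _ ≤ _ := Set.ncard_le_ncard (by
          rintro _ ⟨i, rfl⟩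
          exact axisColour_eq_three_iff.2 ⟨i, Or.inl rfl⟩)
  have htwo : {x | axisColour (firstTwoMarker n) x = 2}.ncard ≤ 2 :=
    (Set.ncard_le_ncard fun x hx => mem_of_axisColour_eq_two hx).trans (ncard_signedPair_le _)
  omega

theorem isRigidColouring_firstTwoMarker (hn : Monotone n) :
    IsRigidColouring Set.univ (axisColour (firstTwoMarker n)) := by
  have h01 : (0 : Fin (r + 3)) ≠ 1 := by simp
  exact isRigidColouring_axisColour hn (fun x => neg_mem_signedPair) (zero_notMem_axis_add h01)
    (fun i j hij hi hj => axisGen_sub_notMem_axis_add (ne_of_val_succ_eq hij) hi hj h01)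
    ncard_colour_two_lt_of_firstTwoMarker
    fun ψ hψ h0 hcol _ => mapsTo_axis_of_firstTwoMarker hψ h0 hcol

end RankAtLeastThree

section NoMarker

variable {r : ℕ} {n : Fin (r + 1) → ℕ} [∀ i, Fact (1 < n i)]

theorem ncard_colour_two_lt_of_empty :
    {x | axisColour (n := n) ∅ x = 2}.ncard < {x | axisColour (n := n) ∅ x = 3}.ncard := by
  have (i : Fin (r + 1)) : NeZero (n i) := ⟨(zero_lt_one.trans Fact.out).ne'⟩
  have hempty : {x | axisColour (n := n) ∅ x = 2} = ∅ :=
    Set.eq_empty_of_forall_notMem fun x hx => mem_of_axisColour_eq_two hx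
  rw [hempty, Set.ncard_empty, Set.ncard_pos]
  exact ⟨axisGen n 0, axisColour_eq_three_iff.2 ⟨0, Or.inl rfl⟩⟩

theorem isRigidColouring_of_rank_one {n : Fin 1 → ℕ} [∀ i, Fact (1 < n i)] :
    IsRigidColouring Set.univ (axisColour (n := n) ∅) := by
  have hn : Monotone n := fun i j _ => (congrArg n (Subsingleton.elim i j)).le
  refine isRigidColouring_axisColour hn (by simp) (by simp) (by simp)
    ncard_colour_two_lt_of_empty fun ψ _ h0 hcol _ k => ?_
  have haxes : axes n = signedPair (axisGen n k) := by
    ext u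
    exact ⟨fun ⟨i, hi⟩ => Subsingleton.elim i k ▸ hi, fun h => ⟨k, h⟩⟩
  exact haxes ▸ mapsTo_axes h0 hcol

theorem isRigidColouring_of_rank_two_of_axis {n : Fin 2 → ℕ} [∀ i, Fact (1 < n i)]
    (hn : Monotone n) :
    IsRigidColouring (signedPair (axisGen n 0)) (axisColour (n := n) ∅) := by
  have (i : Fin 2) : NeZero (n i) := ⟨(zero_lt_one.trans Fact.out).ne'⟩
  refine isRigidColouring_axisColour hn (by simp) (by simp) (by simp)
    ncard_colour_two_lt_of_empty fun ψ hψ h0 hcol hE k => ?_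
  fin_cases k
  · exact hE
  · exact axes_diff_axis (n := n) zero_ne_one ▸
      mapsTo_diff_of_finite hψ (mapsTo_axes h0 hcol) hE

end NoMarker

section RankTwo

variable {n : Fin 2 → ℕ}

variable (n) in
/-- The marker `±(e_1 + e_1)` of the second axis in rank two. -/
def doubleMarker : Set ((i : Fin 2) → ZMod (n i)) := signedPair (2 • axisGen n 1)

theorem two_ne_zero_of_two_lt {m : ℕ} (hm : 2 < m) : (2 : ZMod m) ≠ 0 := by
  have : Fact (2 < m) := ⟨hm⟩
  intro h
  exact ZMod.neg_one_ne_one (n := m) (by linear_combination -h)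

theorem coordSupport_of_mem_doubleMarker (h1 : 2 < n 1) {x : (i : Fin 2) → ZMod (n i)}
    (hx : x ∈ doubleMarker n) : coordSupport x = {1} := by
  have htwo : coordSupport (2 • axisGen n 1) = {1} := by
    ext k
    fin_cases k
    · simp [coordSupport, axisGen_of_ne (zero_ne_one (α := Fin 2))]
    · simp [coordSupport, axisGen_same, two_ne_zero_of_two_lt h1]
  rcases hx with rfl | rfl
  · exact htwo
  · rw [coordSupport_neg, htwo]

theorem axisColour_doubleMarker_two_nsmul :
    axisColour (doubleMarker n) (2 • axisGen n 1) = 3 ∨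
      axisColour (doubleMarker n) (2 • axisGen n 1) = 2 := by
  by_cases h : axisColour (doubleMarker n) (2 • axisGen n 1) = 3
  · exact Or.inl h
  · exact Or.inr (axisColour_eq_two_of_mem h (Or.inl rfl))

variable [∀ i, Fact (1 < n i)]

theorem neg_axisGen_of_le_two {i : Fin 2} (h : n i ≤ 2) : -axisGen n i = axisGen n i := by
  have : NeZero (n i) := ⟨(zero_lt_one.trans Fact.out).ne'⟩
  rw [axisGen, ← Pi.single_neg]
  exact congrArg _ (by simpa using units_smul_eq_self_of_le_two h (-1) 1)

theorem eq_three_of_two_nsmul_mem_axis (h1 : 2 < n 1) {i : Fin 2}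
    (h : 2 • axisGen n 1 ∈ signedPair (axisGen n i)) : n 1 = 3 := by
  have hi := (coordSupport_of_mem_axis h).symm.trans
    (coordSupport_of_mem_doubleMarker h1 (Or.inl rfl))
  obtain rfl : i = 1 := Set.singleton_injective hi
  have hdvd : n 1 ∣ 3 := by
    rw [← ZMod.natCast_eq_zero_iff]
    rcases h with h | h <;> have h := congrFun h 1 <;>
      simp only [Pi.smul_apply, Pi.neg_apply, axisGen_same, nsmul_one] at h <;> push_cast at h ⊢
    · exact absurd (show (1 : ZMod (n 1)) = 0 by linear_combination h) one_ne_zero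
    · linear_combination h
  exact (Nat.dvd_prime Nat.prime_three).1 hdvd |>.resolve_left (by omega)

theorem axisColour_sub_ne_of_mem_axis_zero (h1 : 2 < n 1) (h : n 1 = 3 → n 0 = 2)
    {u v : (i : Fin 2) → ZMod (n i)} (hu : u ∈ signedPair (axisGen n 0)) (hv : v ∈ axes n) :
    axisColour (doubleMarker n) (u - v) ≠ axisColour (doubleMarker n) (2 • axisGen n 1) := by
  intro heq
  obtain ⟨l, hl⟩ := hv
  have hmark (hmem : u - v ∈ doubleMarker n) : False := by
    have h0 : (0 : Fin 2) ∉ coordSupport (u - v) := by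
      simp [coordSupport_of_mem_doubleMarker h1 hmem]
    have h1 : (1 : Fin 2) ∈ coordSupport (u - v) := by
      simp [coordSupport_of_mem_doubleMarker h1 hmem]
    by_cases hl0 : 0 = l
    · subst hl0
      simpa using coordSupport_sub_subset_of_mem_axis hu hl h1
    · exact h0 (coordSupport_sub_of_mem_axis hl0 hu hl ▸ Or.inl rfl)
  rcases axisColour_doubleMarker_two_nsmul (n := n) with hc | hc <;> rw [hc] at heq
  · by_cases hl0 : 0 = l
    · subst hl0
      obtain ⟨i, hi⟩ := axisColour_eq_three_iff.1 hc
      have hneg := neg_axisGen_of_le_two (h (eq_three_of_two_nsmul_mem_axis h1 hi)).le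
      have huv : u - v = 0 := by
        rcases hu with rfl | rfl <;> rcases hl with rfl | rfl <;> simp [hneg]
      obtain ⟨k, hk⟩ := axisColour_eq_three_iff.1 heq
      rw [huv] at hk
      exact (Set.singleton_nonempty k).ne_empty
        ((coordSupport_of_mem_axis hk).symm.trans coordSupport_zero)
    · exact axisColour_ne_three_of_coordSupport hl0 (coordSupport_sub_of_mem_axis hl0 hu hl) heq
  · exact hmark (mem_of_axisColour_eq_two heq)

theorem setOf_doubleMarker_neighbour (h1 : 2 < n 1) (h : n 1 = 3 → n 0 = 2) :
    {u ∈ axes n | ∃ v ∈ axes n, axisColour (doubleMarker n) (u - v) =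
      axisColour (doubleMarker n) (2 • axisGen n 1)} = signedPair (axisGen n 1) := by
  ext u
  constructor
  · rintro ⟨⟨i, hi⟩, v, hv, heq⟩
    by_cases hi0 : i = 0
    · exact absurd heq (axisColour_sub_ne_of_mem_axis_zero h1 h (hi0 ▸ hi) hv)
    · exact (Fin.eq_one_of_ne_zero i hi0) ▸ hi
  · intro hu
    refine ⟨⟨1, hu⟩, -u, ⟨1, neg_mem_signedPair hu⟩, ?_⟩
    rw [sub_neg_eq_add, ← two_nsmul]
    rcases hu with rfl | rfl
    · rfl
    · rw [smul_neg, axisColour_neg fun x => neg_mem_signedPair]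

theorem ncard_colour_two_lt_of_doubleMarker (h1 : 2 < n 1) :
    {x | axisColour (doubleMarker n) x = 2}.ncard <
      {x | axisColour (doubleMarker n) x = 3}.ncard := by
  have (i : Fin 2) : NeZero (n i) := ⟨(zero_lt_one.trans Fact.out).ne'⟩
  have hthree : 2 < {x | axisColour (doubleMarker n) x = 3}.ncard := by
    have : Fact (2 < n 1) := ⟨h1⟩
    refine (Set.two_lt_ncard_iff).2 ⟨axisGen n 0, axisGen n 1, -axisGen n 1,
      axisColour_eq_three_iff.2 ⟨0, Or.inl rfl⟩, axisColour_eq_three_iff.2 ⟨1, Or.inl rfl⟩,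
      axisColour_eq_three_iff.2 ⟨1, Or.inr rfl⟩, fun h => ?_, fun h => ?_, fun h => ?_⟩
    · exact zero_ne_one (eq_of_mem_axis (Or.inl rfl) (Or.inl h))
    · exact zero_ne_one (eq_of_mem_axis (Or.inl rfl) (Or.inr h))
    · have h := congrFun h 1
      rw [Pi.neg_apply, axisGen_same] at h
      exact ZMod.neg_one_ne_one h.symm
  have htwo : {x | axisColour (doubleMarker n) x = 2}.ncard ≤ 2 :=
    (Set.ncard_le_ncard fun x hx => mem_of_axisColour_eq_two hx).trans (ncard_signedPair_le _)
  omega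

theorem isRigidColouring_doubleMarker (hn : Monotone n) (h1 : 2 < n 1) (h : n 1 = 3 → n 0 = 2) :
    IsRigidColouring Set.univ (axisColour (doubleMarker n)) := by
  have (i : Fin 2) : NeZero (n i) := ⟨(zero_lt_one.trans Fact.out).ne'⟩
  refine isRigidColouring_axisColour hn (fun x => neg_mem_signedPair) (fun h0 => ?_)
    (fun i j hij _ _ hmem => ?_) (ncard_colour_two_lt_of_doubleMarker h1)
    fun ψ hψ h0 hcol _ k => ?_
  · have := (coordSupport_of_mem_doubleMarker h1 h0).symm.trans coordSupport_zero
    exact (Set.singleton_nonempty 1).ne_empty this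
  · have hne := ne_of_val_succ_eq hij
    have hsupp := coordSupport_sub_of_mem_axis (n := n) hne (Or.inl rfl) (Or.inl rfl)
    rw [coordSupport_of_mem_doubleMarker h1 hmem] at hsupp
    have hi : i ∈ ({1} : Set (Fin 2)) := hsupp ▸ Or.inl rfl
    have hj : j ∈ ({1} : Set (Fin 2)) := hsupp ▸ Or.inr rfl
    exact hne (hi.trans hj.symm)
  · have hS := mapsTo_axes h0 hcol
    have hone := setOf_doubleMarker_neighbour h1 h ▸ mapsTo_colour_neighbours hcol hS hS
      (axisColour (doubleMarker n) (2 • axisGen n 1))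
    fin_cases k
    · exact axes_diff_axis (n := n) one_ne_zero ▸ mapsTo_diff_of_finite hψ hS hone
    · exact hone

end RankTwo

end Recognition

section InternalColourings

/-- The elementary abelian groups of rank two. For `p = 2` and `p = 3` they carry no colouring that
is rigid without the help of a distinguished pair `±h`. -/
def IsElementaryPlane (p : ℕ) (B : Type*) [AddCommGroup B] : Prop :=
  Nonempty (B ≃+ (Fin 2 → ZMod p))

theorem IsElementaryPlane.card_eq {p : ℕ} [NeZero p] {B : Type*} [AddCommGroup B]
    (h : IsElementaryPlane p B) : Nat.card B = p ^ 2 := by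
  obtain ⟨e⟩ := h
  rw [Nat.card_congr e.toEquiv]
  simp

theorem IsElementaryPlane.nsmul_eq_zero {p : ℕ} {B : Type*} [AddCommGroup B]
    (h : IsElementaryPlane p B) (x : B) : p • x = 0 := by
  obtain ⟨e⟩ := h
  apply e.injective
  rw [map_nsmul, map_zero]
  funext i
  simp

theorem exists_addEquiv_pi_zmod_monotone (B : Type*) [AddCommGroup B] [Finite B] :
    ∃ (r : ℕ) (n : Fin r → ℕ), (∀ i, 1 < n i) ∧ Monotone n ∧
      Nonempty (B ≃+ ((i : Fin r) → ZMod (n i))) := by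
  obtain ⟨ι, hι, n, hn, ⟨e⟩⟩ := AddCommGroup.equiv_directSum_zmod_of_finite' B
  let f := Fintype.equivFin ι
  let g : Fin (Fintype.card ι) ≃ ι := (Tuple.sort (n ∘ f.symm)).trans f.symm
  exact ⟨Fintype.card ι, n ∘ g, fun i => hn _, Tuple.monotone_sort (n ∘ f.symm),
    ⟨(e.trans (DirectSum.addEquivProd _)).trans
      (RingEquiv.piCongrLeft (fun i => ZMod (n i)) g).symm.toAddEquiv⟩⟩

theorem isElementaryPlane_of_forall_eq {p : ℕ} {n : Fin 2 → ℕ} {B : Type*} [AddCommGroup B]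
    (e : B ≃+ ((i : Fin 2) → ZMod (n i))) (h0 : n 0 = p) (h1 : n 1 = p) :
    IsElementaryPlane p B := by
  obtain rfl : n = fun _ => p := by
    funext i
    fin_cases i
    exacts [h0, h1]
  exact ⟨e⟩

theorem exists_isRigidColouring_univ {B : Type*} [AddCommGroup B] [Finite B]
    (h2 : ¬IsElementaryPlane 2 B) (h3 : ¬IsElementaryPlane 3 B) :
    ∃ c : B → Fin 4, IsRigidColouring Set.univ c := by
  obtain ⟨r, n, hn, hmono, ⟨e⟩⟩ := exists_addEquiv_pi_zmod_monotone B
  have (i : Fin r) : Fact (1 < n i) := ⟨hn i⟩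
  suffices ∃ c : ((i : Fin r) → ZMod (n i)) → Fin 4, IsRigidColouring Set.univ c from
    this.imp' (· ∘ e) fun c hc => hc.comp_addEquiv e
  match r with
  | 0 => exact ⟨_, isRigidColouring_of_subsingleton _⟩
  | 1 => exact ⟨_, isRigidColouring_of_rank_one⟩
  | 2 =>
    have hle : n 0 ≤ n 1 := hmono (Fin.zero_le 1)
    have hn0 := hn 0
    have htwo : ¬(n 0 = 2 ∧ n 1 = 2) := fun h => h2 (isElementaryPlane_of_forall_eq e h.1 h.2)
    have hthree : ¬(n 0 = 3 ∧ n 1 = 3) := fun h => h3 (isElementaryPlane_of_forall_eq e h.1 h.2)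
    exact ⟨_, isRigidColouring_doubleMarker hmono (by omega) (by omega)⟩
  | r + 3 => exact ⟨_, isRigidColouring_firstTwoMarker hmono⟩

theorem exists_linearEquiv_apply_eq {F V : Type*} [Field F] [AddCommGroup V] [Module F V]
    {x y : V} (hx : x ≠ 0) (hy : y ≠ 0) : ∃ f : V ≃ₗ[F] V, f x = y := by
  obtain ⟨f, hf⟩ := Submodule.exists_linearEquiv_restrict_eq
    ((LinearEquiv.toSpanNonzeroSingleton F V x hx).symm.trans
      (LinearEquiv.toSpanNonzeroSingleton F V y hy))
  refine ⟨f, ?_⟩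
  have := hf (LinearEquiv.toSpanNonzeroSingleton F V x hx 1)
  rw [LinearEquiv.trans_apply, LinearEquiv.symm_apply_apply] at this
  simpa using this.symm

theorem exists_isRigidColouring_signedPair {p : ℕ} [Fact p.Prime] {B : Type*} [AddCommGroup B]
    (hB : IsElementaryPlane p B) {h : B} (hh : h ≠ 0) :
    ∃ c : B → Fin 4, IsRigidColouring (signedPair h) c := by
  obtain ⟨e⟩ := hB
  have (i : Fin 2) : Fact (1 < (fun _ => p) i) := ⟨Nat.Prime.one_lt Fact.out⟩
  have he : (axisGen (fun _ : Fin 2 => p) 0 : Fin 2 → ZMod p) ≠ 0 := fun h0 =>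
    one_ne_zero ((axisGen_same (n := fun _ => p) 0).symm.trans (congrFun h0 0))
  obtain ⟨f, hf⟩ := exists_linearEquiv_apply_eq (F := ZMod p) (e.map_ne_zero_iff.2 hh) he
  let g : B ≃+ (Fin 2 → ZMod p) := e.trans f.toAddEquiv
  have hpair : g ⁻¹' signedPair (axisGen (fun _ : Fin 2 => p) 0) = signedPair h := by
    have hg : g h = axisGen (fun _ : Fin 2 => p) 0 := hf
    ext x
    simp only [signedPair, Set.mem_preimage, Set.mem_ofPred_eq, ← hg, ← map_neg,
      EmbeddingLike.apply_eq_iff_eq]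
  exact ⟨_, hpair ▸ (isRigidColouring_of_rank_two_of_axis monotone_const).comp_addEquiv g⟩

end InternalColourings

section Labellings

variable {ι : Type*} {M : SimpleGraph ι}

/-- `M` has maximum degree at most one. -/
def IsPartialMatching (M : SimpleGraph ι) : Prop :=
  ∀ ⦃i j k⦄, M.Adj i j → M.Adj i k → j = k

theorem exists_maximal_isPartialMatching [Finite ι] (R : SimpleGraph ι) :
    ∃ M ≤ R, IsPartialMatching M ∧ ∀ i j, R.Adj i j → ∃ k, M.Adj i k ∨ M.Adj j k := by
  obtain ⟨M, ⟨hMR, hM⟩, hmax⟩ := Set.Finite.exists_maximal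
    (Set.toFinite {M : SimpleGraph ι | M ≤ R ∧ IsPartialMatching M})
    ⟨⊥, bot_le, fun _ _ _ h => h.elim⟩
  refine ⟨M, hMR, hM, fun i j hij => ?_⟩
  by_contra! hfree
  have hmem : M ⊔ SimpleGraph.edge i j ∈ {M : SimpleGraph ι | M ≤ R ∧ IsPartialMatching M} := by
    refine ⟨sup_le hMR ((SimpleGraph.edge_le_iff R).2 (Or.inr hij)), fun a b c hab hac => ?_⟩
    simp only [SimpleGraph.sup_adj, SimpleGraph.edge_adj] at hab hac
    rcases hab with hab | ⟨⟨rfl, rfl⟩ | ⟨rfl, rfl⟩, hne⟩ <;>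
      rcases hac with hac | ⟨⟨h, rfl⟩ | ⟨h, rfl⟩, -⟩
    all_goals first | exact hM hab hac | rfl | grind
  exact (hfree j).1 (hmax hmem le_sup_left
    (Or.inr ((SimpleGraph.edge_adj _ _ _ _).2 ⟨Or.inl ⟨rfl, rfl⟩, hij.ne⟩)))

/-- The labels of the pairs outside `M`, together with `M` itself, distinguish the points
of `S`. -/
def IsRigidLabelling (M : SimpleGraph ι) (S : Finset ι) (l : Sym2 ι → Fin 3) : Prop :=
  ∀ π : Equiv.Perm ι, Set.MapsTo π S S → (∀ i ∈ S, ∀ j ∈ S, M.Adj (π i) (π j) ↔ M.Adj i j) →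
    (∀ i ∈ S, ∀ j ∈ S, i ≠ j → ¬M.Adj i j → l s(π i, π j) = l s(i, j)) → ∀ i ∈ S, π i = i

theorem IsPartialMatching.exists_eq_triple [DecidableEq ι] (hM : IsPartialMatching M)
    {S : Finset ι} (hS : S.card = 3) :
    ∃ v a b, v ≠ a ∧ v ≠ b ∧ a ≠ b ∧ S = {v, a, b} ∧ ¬M.Adj v a ∧ ¬M.Adj v b := by
  obtain ⟨a, b, c, hab, hac, hbc, rfl⟩ := Finset.card_eq_three.1 hS
  by_cases h1 : M.Adj a b
  · refine ⟨c, a, b, hac.symm, hbc.symm, hab, by grind, fun h => ?_, fun h => ?_⟩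
    · exact hbc (hM h1 h.symm)
    · exact hac (hM h1.symm h.symm)
  · by_cases h2 : M.Adj a c
    · exact ⟨b, a, c, hab.symm, hbc, hac, by grind, fun h => h1 h.symm,
        fun h => hab (hM h2.symm h.symm)⟩
    · exact ⟨a, b, c, hab, hac, hbc, rfl, h1, h2⟩

theorem isRigidLabelling_triple [DecidableEq ι] {v a b : ι} (hva : v ≠ a) (hvb : v ≠ b)
    (hab : a ≠ b) (ha : ¬M.Adj v a) (hb : ¬M.Adj v b) :
    IsRigidLabelling M {v, a, b} fun e =>
      if e = s(v, a) then 0 else if e = s(v, b) then 1 else 2 := by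
  intro π _ _ hl
  have hea : s(π v, π a) = s(v, a) := by
    by_contra h
    have := hl v (by simp) a (by simp) hva ha
    grind
  have heb : s(π v, π b) = s(v, b) := by
    by_contra h
    have := hl v (by simp) b (by simp) hvb hb
    have : s(v, a) ≠ s(v, b) := by simpa using ⟨hab, fun h => absurd h hvb⟩
    grind
  have hv : π v = v := by
    rcases Sym2.eq_iff.1 hea with ⟨h, -⟩ | ⟨h, -⟩
    · exact h
    · rcases Sym2.eq_iff.1 heb with ⟨h', -⟩ | ⟨h', -⟩
      · exact h'
      · exact absurd (h.symm.trans h') hab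
  rw [hv, Sym2.congr_right] at hea heb
  simp [hv, hea, heb]

theorem IsPartialMatching.exists_not_adj (hM : IsPartialMatching M) {S : Finset ι}
    (hS : 3 ≤ S.card) {u : ι} (hu : u ∈ S) : ∃ w ∈ S, w ≠ u ∧ ¬M.Adj u w := by
  classical
  have hcard : 1 < (S.erase u).card := by
    rw [Finset.card_erase_of_mem hu]
    omega
  obtain ⟨a, ha, b, hb, hab⟩ := Finset.one_lt_card.1 hcard
  rw [Finset.mem_erase] at ha hb
  by_cases h : M.Adj u a
  · exact ⟨b, hb.2, hb.1, fun h' => hab (hM h h')⟩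
  · exact ⟨a, ha.2, ha.1, h⟩

/-- Vertices monochromatic in different colours are distinct and joined by `M`, so there are at
most two of them. -/
theorem IsPartialMatching.exists_not_monochromatic (hM : IsPartialMatching M) {S : Finset ι}
    (hS : 3 ≤ S.card) (l : Sym2 ι → Fin 3) :
    ∃ p, ∀ u ∈ S, ∃ w ∈ S, w ≠ u ∧ ¬M.Adj u w ∧ l s(u, w) ≠ p := by
  by_contra! hcon
  choose u hu hmono using hcon
  have hne {p q : Fin 3} (hpq : p ≠ q) : u p ≠ u q := by
    intro h
    obtain ⟨w, hw, hwu, hMw⟩ := hM.exists_not_adj hS (hu p)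
    refine hpq ((hmono p w hw hwu hMw).symm.trans ?_)
    rw [h] at hwu hMw ⊢
    exact hmono q w hw hwu hMw
  have hadj {p q : Fin 3} (hpq : p ≠ q) : M.Adj (u p) (u q) := by
    by_contra hnot
    have hp := hmono p (u q) (hu q) (hne hpq).symm hnot
    have hq := hmono q (u p) (hu p) (hne hpq) fun h => hnot h.symm
    rw [Sym2.eq_swap, hp] at hq
    exact hpq hq
  exact hne (by decide : (1 : Fin 3) ≠ 2)
    (hM (hadj (by decide : (0 : Fin 3) ≠ 1)) (hadj (by decide)))

theorem IsRigidLabelling.insert_vertex [DecidableEq ι] {S : Finset ι} {l : Sym2 ι → Fin 3}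
    (hl : IsRigidLabelling M S l) {v : ι} (hv : v ∉ S) {p : Fin 3}
    (hp : ∀ u ∈ S, ∃ w ∈ S, w ≠ u ∧ ¬M.Adj u w ∧ l s(u, w) ≠ p) :
    IsRigidLabelling M (insert v S) fun e => if v ∈ e then p else l e := by
  intro π hπ hadj hlab
  have hne {i : ι} (hi : i ∈ S) : i ≠ v := fun h => hv (h ▸ hi)
  have hfix : π v = v := by
    by_contra hne'
    have hu : π v ∈ S := Finset.mem_of_mem_insert_of_ne (hπ (Finset.mem_insert_self _ _)) hne'
    obtain ⟨w, hw, hwu, hMw, hlw⟩ := hp _ hu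
    obtain ⟨x, hx, rfl⟩ := Finset.surjOn_of_injOn_of_card_le π hπ π.injective.injOn le_rfl
      (Finset.mem_insert_of_mem hw : w ∈ insert v S)
    have hxv : v ≠ x := fun h => hwu (h ▸ rfl)
    have := hlab v (Finset.mem_insert_self _ _) x hx hxv
      fun h => hMw ((hadj v (Finset.mem_insert_self _ _) x hx).2 h)
    have hmem : v ∉ s(π v, π x) := by
      rw [Sym2.mem_iff]
      exact not_or.2 ⟨Ne.symm hne', (hne hw).symm⟩
    beta_reduce at this
    rw [if_neg hmem, if_pos (Sym2.mem_mk_left v x)] at this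
    exact hlw this
  have hmaps : Set.MapsTo π S S := fun i hi =>
    Finset.mem_of_mem_insert_of_ne (hπ (Finset.mem_insert_of_mem hi))
      fun h => hne hi (π.injective (h.trans hfix.symm))
  have hrec := hl π hmaps
    (fun i hi j hj => hadj i (Finset.mem_insert_of_mem hi) j (Finset.mem_insert_of_mem hj))
    fun i hi j hj hij hM => by
      have := hlab i (Finset.mem_insert_of_mem hi) j (Finset.mem_insert_of_mem hj) hij hM
      simpa [(hne hi).symm, (hne hj).symm, (hne (hmaps hi)).symm, (hne (hmaps hj)).symm] using this
  intro i hi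
  rcases Finset.mem_insert.1 hi with rfl | hi
  · exact hfix
  · exact hrec i hi

theorem IsPartialMatching.exists_isRigidLabelling (hM : IsPartialMatching M) (S : Finset ι)
    (hS : 3 ≤ S.card) : ∃ l : Sym2 ι → Fin 3, IsRigidLabelling M S l := by
  classical
  induction S using Finset.induction_on with
  | empty => simp at hS
  | insert v S hv ih =>
    by_cases h3 : 3 ≤ S.card
    · obtain ⟨l, hl⟩ := ih h3
      obtain ⟨p, hp⟩ := hM.exists_not_monochromatic h3 l
      exact ⟨_, hl.insert_vertex hv hp⟩
    · have hcard : (insert v S).card = 3 := by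
        rw [Finset.card_insert_of_notMem hv] at hS ⊢
        omega
      obtain ⟨u, a, b, hua, hub, hab, hSeq, ha, hb⟩ := hM.exists_eq_triple hcard
      exact hSeq ▸ ⟨_, isRigidLabelling_triple hua hub hab ha hb⟩

end Labellings

section Orbits

variable (A X : Type*) [AddCommGroup A] [AddAction A X]

/-- `A` is determined by its orbits on unordered pairs: every permutation of `X` preserving them
is the action of an element of `A`. -/
def IsPairClosed : Prop :=
  ∀ σ : Equiv.Perm X, (∀ x y, ∃ a : A, s(a +ᵥ x, a +ᵥ y) = s(σ x, σ y)) →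
    ∃ a : A, ∀ x, a +ᵥ x = σ x

variable {X} in
/-- The permutations of `X` induced by `A` are the automorphisms of the coloured graph `γ`. -/
def IsAutColouring {κ : Type*} (γ : Sym2 X → κ) : Prop :=
  ∀ σ : Equiv.Perm X,
    (∃ a : A, ∀ x, a +ᵥ x = σ x) ↔ ∀ x y, x ≠ y → γ s(σ x, σ y) = γ s(x, y)

/-- The permutations induced by `A` are the automorphisms of a graph with four colours. -/
def HasFourColouring : Prop :=
  ∃ γ : Sym2 X → Fin 4, IsAutColouring A γ

/-- The set of orbits of `A` on `X`. -/
abbrev Orbits : Type _ := AddAction.orbitRel.Quotient A X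

variable {X}

/-- The orbit of a point. -/
def orbitIndex (x : X) : Orbits A X := Quotient.mk'' x

variable {A}

/-- The stabilizer of every point of an orbit. -/
noncomputable def orbitStabilizer (i : Orbits A X) : AddSubgroup A := AddAction.stabilizer A i.out

/-- The points of the orbit `i`, parametrized by `A` from a chosen base point. -/
noncomputable def orbitPoint (i : Orbits A X) (a : A) : X := a +ᵥ i.out

theorem vadd_orbitPoint (g : A) (i : Orbits A X) (a : A) :
    g +ᵥ orbitPoint i a = orbitPoint i (g + a) :=
  vadd_vadd g a i.out

theorem orbitIndex_orbitPoint (i : Orbits A X) (a : A) : orbitIndex A (orbitPoint i a) = i :=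
  (Quotient.sound (s := AddAction.orbitRel A X) ⟨a, rfl⟩).trans (Quotient.out_eq i)

theorem eq_of_orbitPoint_eq {i j : Orbits A X} {a b : A} (h : orbitPoint i a = orbitPoint j b) :
    i = j := by
  rw [← orbitIndex_orbitPoint i a, h, orbitIndex_orbitPoint]

theorem exists_orbitPoint_eq {i : Orbits A X} {x : X} (hx : orbitIndex A x = i) :
    ∃ a, orbitPoint i a = x := by
  subst hx
  exact (AddAction.orbitRel A X).symm (Quotient.mk_out' x)

theorem exists_exists_orbitPoint_eq (x : X) : ∃ (i : Orbits A X) (a : A), orbitPoint i a = x :=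
  ⟨_, exists_orbitPoint_eq rfl⟩

theorem orbitPoint_eq_iff {i : Orbits A X} {a b : A} :
    orbitPoint i a = orbitPoint i b ↔ b - a ∈ orbitStabilizer i := by
  rw [orbitStabilizer, AddAction.mem_stabilizer_iff, orbitPoint, orbitPoint, sub_eq_neg_add,
    add_vadd, neg_vadd_eq_iff, eq_comm]

/-- `G i j a` is a colour for the pairs of points of the orbits `i` and `j` with difference `a`:
it does not depend on the order of the two points nor on the choice of the difference. -/
structure IsColourSystem {ι D : Type*} (K : ι → AddSubgroup A) (G : ι → ι → A → D) : Prop where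
  neg : ∀ i j a, G j i (-a) = G i j a
  add_mem : ∀ i j a, ∀ k ∈ K i, G i j (a + k) = G i j a

theorem IsColourSystem.congr {ι D : Type*} {K : ι → AddSubgroup A} {G : ι → ι → A → D}
    (hG : IsColourSystem K G) {i j : ι} {a b : A} (h : b - a ∈ K i ⊔ K j) :
    G i j b = G i j a := by
  obtain ⟨y, hy, z, hz, hyz⟩ := AddSubgroup.mem_sup.1 h
  obtain rfl : b = a + z + y := by rw [add_assoc, add_comm z, hyz, add_sub_cancel]
  rw [hG.add_mem i j _ y hy, ← hG.neg, neg_add, hG.add_mem j i _ _ (neg_mem hz), hG.neg]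

theorem IsColourSystem.exists_colouring {D : Type*} {G : Orbits A X → Orbits A X → A → D}
    (hG : IsColourSystem orbitStabilizer G) :
    ∃ γ : Sym2 X → D, ∀ i j a b, γ s(orbitPoint i a, orbitPoint j b) = G i j (b - a) := by
  choose r hr using fun x : X => exists_orbitPoint_eq (A := A) (x := x) rfl
  have hr' (i : Orbits A X) (a : A) : a - r (orbitPoint i a) ∈ orbitStabilizer i := by
    rw [← orbitPoint_eq_iff]
    simpa only [orbitIndex_orbitPoint] using hr (orbitPoint i a)
  refine ⟨Sym2.lift ⟨fun x y => G (orbitIndex A x) (orbitIndex A y) (r y - r x), fun x y => ?_⟩,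
    fun i j a b => ?_⟩
  · dsimp only
    rw [← hG.neg, neg_sub]
  · rw [Sym2.lift_mk]
    dsimp only
    rw [orbitIndex_orbitPoint, orbitIndex_orbitPoint]
    refine hG.congr ?_
    rw [show ∀ x y : A, y - x - (b - a) = (a - x) - (b - y) by intros; abel]
    exact sub_mem (AddSubgroup.mem_sup_left (hr' i a)) (AddSubgroup.mem_sup_right (hr' j b))

/-- `f` induces a bijection of `A ⧸ K`. -/
structure IsQuotientBijection (K : AddSubgroup A) (f : A → A) : Prop where
  sub_mem_iff : ∀ a b, f b - f a ∈ K ↔ b - a ∈ K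
  exists_sub_mem : ∀ b, ∃ a, b - f a ∈ K

theorem isQuotientBijection_of_perm {σ : Equiv.Perm X} {f : Orbits A X → A → A}
    (hσ : ∀ i a, σ (orbitPoint i a) = orbitPoint i (f i a)) (i : Orbits A X) :
    IsQuotientBijection (orbitStabilizer i) (f i) where
  sub_mem_iff a b := by
    rw [← orbitPoint_eq_iff, ← orbitPoint_eq_iff, ← hσ, ← hσ, σ.injective.eq_iff]
  exists_sub_mem b := by
    obtain ⟨x, hx⟩ := σ.surjective (orbitPoint i b)
    obtain ⟨j, a, rfl⟩ := exists_exists_orbitPoint_eq (A := A) x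
    rw [hσ] at hx
    obtain rfl := eq_of_orbitPoint_eq hx
    exact ⟨a, orbitPoint_eq_iff.1 hx⟩

theorem exists_perm_of_isQuotientBijection {f : Orbits A X → A → A}
    (hf : ∀ i, IsQuotientBijection (orbitStabilizer i) (f i)) :
    ∃ σ : Equiv.Perm X, ∀ i a, σ (orbitPoint i a) = orbitPoint i (f i a) := by
  choose r hr using fun x : X => exists_orbitPoint_eq (A := A) (x := x) rfl
  have hσ (i : Orbits A X) (a : A) :
      orbitPoint (orbitIndex A (orbitPoint i a))
          (f (orbitIndex A (orbitPoint i a)) (r (orbitPoint i a))) = orbitPoint i (f i a) := by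
    have := hr (orbitPoint i a)
    rw [orbitIndex_orbitPoint] at this ⊢
    rwa [orbitPoint_eq_iff, (hf _).sub_mem_iff, ← orbitPoint_eq_iff]
  refine ⟨Equiv.ofBijective (fun x => orbitPoint (orbitIndex A x) (f _ (r x))) ⟨?_, ?_⟩, hσ⟩
  · intro x y hxy
    obtain ⟨i, a, rfl⟩ := exists_exists_orbitPoint_eq (A := A) x
    obtain ⟨j, b, rfl⟩ := exists_exists_orbitPoint_eq (A := A) y
    simp only [hσ] at hxy
    obtain rfl := eq_of_orbitPoint_eq hxy
    rwa [orbitPoint_eq_iff, (hf _).sub_mem_iff, ← orbitPoint_eq_iff] at hxy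
  · intro x
    obtain ⟨i, b, rfl⟩ := exists_exists_orbitPoint_eq (A := A) x
    obtain ⟨a, ha⟩ := (hf i).exists_sub_mem b
    exact ⟨orbitPoint i a, (hσ i a).trans (orbitPoint_eq_iff.2 ha)⟩

/-- Modulo `K`, the map `f` is `a ↦ ±a + t`. -/
def IsSignedShift (K : AddSubgroup A) (f : A → A) : Prop :=
  ∃ (ε : ℤˣ) (t : A), ∀ a, f a - (ε • a + t) ∈ K

theorem IsRigidColouring.isSignedShift {K : AddSubgroup A} {E : Set (A ⧸ K)}
    {c : A ⧸ K → Fin 4} (hc : IsRigidColouring E c) {f : A → A} (hf : IsQuotientBijection K f)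
    (hcol : ∀ a b, c ((f b - f a : A) : A ⧸ K) = c ((b - a : A) : A ⧸ K))
    (hE : ∀ a b, ((b - a : A) : A ⧸ K) ∈ E → ((f b - f a : A) : A ⧸ K) ∈ E) :
    IsSignedShift K f := by
  have hmk {a b : A} : (a : A ⧸ K) = b ↔ b - a ∈ K := by
    rw [QuotientAddGroup.eq, neg_add_eq_sub]
  let φ : A ⧸ K → A ⧸ K :=
    Quotient.map' f fun a b h => QuotientAddGroup.leftRel_apply.2 <| by
      rw [QuotientAddGroup.leftRel_apply, neg_add_eq_sub] at h
      rwa [neg_add_eq_sub, hf.sub_mem_iff]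
  have hφ (a : A) : φ a = f a := rfl
  have hbij : φ.Bijective := by
    refine ⟨fun u v => ?_, fun u => ?_⟩
    · induction u, v using Quotient.inductionOn₂' with | h a b
      rw [hφ, hφ, hmk, hmk, hf.sub_mem_iff]
      exact id
    · induction u using QuotientAddGroup.induction_on with | H b
      obtain ⟨a, ha⟩ := hf.exists_sub_mem b
      exact ⟨a, hmk.2 ha⟩
  have hsigned := hc.rigid φ hbij
    (fun u v => Quotient.inductionOn₂' u v fun a b => hcol b a)
    (fun u v => Quotient.inductionOn₂' u v fun a b => hE b a)
  rcases hsigned with ⟨t, ht⟩ | ⟨t, ht⟩ <;> obtain ⟨t, rfl⟩ := QuotientAddGroup.mk_surjective t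
  · exact ⟨1, t, fun a => hmk.1 (by rw [one_smul]; exact (ht a).symm)⟩
  · exact ⟨-1, t, fun a => hmk.1 (by rw [Units.neg_smul, one_smul]; exact (ht a).symm)⟩

theorem exists_vadd_eq_of_sub_mem_sup {i j : Orbits A X} {a a' b b' : A}
    (h : (b' - b) - (a' - a) ∈ orbitStabilizer i ⊔ orbitStabilizer j) :
    ∃ g : A, g +ᵥ orbitPoint i a = orbitPoint i a' ∧ g +ᵥ orbitPoint j b = orbitPoint j b' := by
  obtain ⟨y, hy, z, hz, hyz⟩ := AddSubgroup.mem_sup.1 h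
  refine ⟨a' - a + y, ?_, ?_⟩ <;> rw [vadd_orbitPoint, orbitPoint_eq_iff]
  · convert! neg_mem hy using 1
    abel
  · convert! hz using 1
    rw [← add_sub_cancel_left y z, hyz]
    abel

theorem IsPairClosed.exists_vadd_eq_of_isSignedShift (hcl : IsPairClosed A X)
    {σ : Equiv.Perm X} {f : Orbits A X → A → A}
    (hσ : ∀ i a, σ (orbitPoint i a) = orbitPoint i (f i a))
    (hsign : ∀ i, IsSignedShift (orbitStabilizer i) (f i))
    (hcross : ∀ i j, i ≠ j → ∀ a b,
      (f j b - b) - (f i a - a) ∈ orbitStabilizer i ⊔ orbitStabilizer j) :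
    ∃ g : A, ∀ x, g +ᵥ x = σ x := by
  refine hcl σ fun x y => ?_
  obtain ⟨i, a, rfl⟩ := exists_exists_orbitPoint_eq (A := A) x
  obtain ⟨j, b, rfl⟩ := exists_exists_orbitPoint_eq (A := A) y
  rw [hσ, hσ]
  by_cases hij : i = j
  · subst hij
    obtain ⟨ε, t, ht⟩ := hsign i
    rcases Int.units_eq_one_or ε with rfl | rfl
    · refine ⟨t, congrArg₂ (fun x y => s(x, y)) ?_ ?_⟩ <;>
        rw [vadd_orbitPoint, orbitPoint_eq_iff, add_comm]
      · simpa using ht a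
      · simpa using ht b
    · refine ⟨t - a - b, (congrArg₂ (fun x y => s(x, y)) ?_ ?_).trans Sym2.eq_swap⟩ <;>
        rw [vadd_orbitPoint, orbitPoint_eq_iff]
      · convert! ht b using 2
        simp only [Units.neg_smul, one_smul]
        abel
      · convert! ht a using 2
        simp only [Units.neg_smul, one_smul]
        abel
  · obtain ⟨g, hg⟩ := exists_vadd_eq_of_sub_mem_sup (hcross i j hij a b)
    exact ⟨g, by rw [hg.1, hg.2]⟩

end Orbits

section CosetPattern

theorem sum_ncard_eq_natCard {α : Type*} [Finite α] (P : α → Fin 3) :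
    {a | P a = 0}.ncard + {a | P a = 1}.ncard + {a | P a = 2}.ncard = Nat.card α := by
  have := Fintype.ofFinite α
  have := Finset.card_eq_sum_card_fiberwise (f := P) (s := Finset.univ) (t := Finset.univ)
    (fun _ _ => Finset.mem_univ _)
  simp only [Set.ncard_eq_toFinset_card', Set.toFinset_ofPred, Nat.card_eq_fintype_card]
  rw [← Finset.card_univ, this, Fin.sum_univ_three]

variable {A : Type*} [AddCommGroup A] {L : AddSubgroup A} {d : A}

/-- A map is reflectable if it is invariant under some `a ↦ -a + t`. -/
def IsReflectable {D : Type*} (G : A → D) : Prop := ∃ t, ∀ a, G (-a + t) = G a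

open Classical in
/-- The colouring of the cosets of a proper subgroup `L` by `1` at `L`, by `2` at `d + L` and by `0`
elsewhere; if `d ∈ L` then the colour `2` is not used. Everything has colour `0` if `L = ⊤`, in
order that `0` is the most frequent colour in this case, too. -/
noncomputable def cosetPattern (L : AddSubgroup A) (d a : A) : Fin 3 :=
  if L = ⊤ then 0 else if a ∈ L then 1 else if a - d ∈ L then 2 else 0

theorem cosetPattern_neg (a : A) : cosetPattern L (-d) (-a) = cosetPattern L d a := by
  have hsub : -a - -d = -(a - d) := by abel
  have hmem : -a - -d ∈ L ↔ a - d ∈ L := by rw [hsub, neg_mem_iff]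
  classical
  exact if_congr Iff.rfl rfl (if_congr neg_mem_iff rfl (if_congr hmem rfl rfl))

theorem cosetPattern_add_mem {k : A} (hk : k ∈ L) (a : A) :
    cosetPattern L d (a + k) = cosetPattern L d a := by
  have hsub : a + k - d ∈ L ↔ a - d ∈ L := by
    rw [add_sub_right_comm, add_mem_cancel_right hk]
  classical
  exact if_congr Iff.rfl rfl (if_congr (add_mem_cancel_right hk) rfl (if_congr hsub rfl rfl))

theorem cosetPattern_eq_one_iff (hL : L ≠ ⊤) {a : A} : cosetPattern L d a = 1 ↔ a ∈ L := by
  unfold cosetPattern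
  split_ifs <;> simp_all

theorem cosetPattern_eq_two_iff (hd : d ∉ L) {a : A} : cosetPattern L d a = 2 ↔ a - d ∈ L := by
  have : L ≠ ⊤ := fun h => hd (h ▸ AddSubgroup.mem_top d)
  have hdisj (ha : a ∈ L) : a - d ∉ L := fun h => hd (by simpa using sub_mem ha h)
  unfold cosetPattern
  split_ifs <;> simp_all

theorem mem_of_cosetPattern_add_eq {t : A}
    (ht : ∀ a, cosetPattern L d (a + t) = cosetPattern L d a) : t ∈ L := by
  by_cases hL : L = ⊤
  · exact hL ▸ AddSubgroup.mem_top t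
  · have := ht 0
    rwa [(cosetPattern_eq_one_iff hL).2 (zero_mem L), zero_add, cosetPattern_eq_one_iff hL] at this

theorem not_isReflectable_cosetPattern (hd : d + d ∉ L) : ¬IsReflectable (cosetPattern L d) := by
  have hdL : d ∉ L := fun h => hd (add_mem h h)
  have hL : L ≠ ⊤ := fun h => hd (h ▸ AddSubgroup.mem_top _)
  rintro ⟨t, ht⟩
  have h0 := ht 0
  have h1 := ht d
  rw [(cosetPattern_eq_one_iff hL).2 (zero_mem L), neg_zero, zero_add,
    cosetPattern_eq_one_iff hL] at h0
  rw [(cosetPattern_eq_two_iff hdL (a := d)).2 (by simp), cosetPattern_eq_two_iff hdL] at h1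
  refine hd ?_
  convert! sub_mem h0 h1 using 1
  abel

theorem ncard_sub_right_preimage (s : Set A) (d : A) : {a | a - d ∈ s}.ncard = s.ncard :=
  Set.ncard_preimage_of_injective_subset_range (sub_left_injective (b := d))
    ((Equiv.subRight d).surjective.range_eq ▸ Set.subset_univ s)

theorem ncard_cosetPattern_eq_one (hL : L ≠ ⊤) :
    {a | cosetPattern L d a = 1}.ncard = Nat.card L := by
  simp only [cosetPattern_eq_one_iff hL]
  rfl

theorem ncard_cosetPattern_eq_two (hd : d ∉ L) :
    {a | cosetPattern L d a = 2}.ncard = Nat.card L := by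
  simp only [cosetPattern_eq_two_iff hd]
  exact ncard_sub_right_preimage (L : Set A) d

theorem ncard_cosetPattern_eq_two_of_mem (hd : d ∈ L) :
    {a | cosetPattern L d a = 2}.ncard = 0 := by
  suffices {a | cosetPattern L d a = 2} = ∅ by rw [this, Set.ncard_empty]
  refine Set.eq_empty_of_forall_notMem fun a ha => ?_
  have hsub : a - d ∈ L → a ∈ L := fun h => by simpa using add_mem h hd
  unfold cosetPattern at ha
  simp only [Set.mem_ofPred_eq] at ha
  split_ifs at ha <;> simp_all

theorem ncard_cosetPattern_le_and_lt [Finite A] (hd : d ∉ L → 4 ≤ L.index) :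
    {a | cosetPattern L d a = 1}.ncard ≤ {a | cosetPattern L d a = 0}.ncard ∧
      {a | cosetPattern L d a = 2}.ncard < {a | cosetPattern L d a = 0}.ncard := by
  have hsum := sum_ncard_eq_natCard (cosetPattern L d)
  have hpos : 0 < Nat.card L := Nat.card_pos
  rw [← L.index_mul_card] at hsum
  by_cases hL : L = ⊤
  · have hzero (a : A) : cosetPattern L d a = 0 := if_pos hL
    simp only [hzero, zero_ne_one, Fin.reduceEq, Set.ofPred_false, Set.ncard_empty] at hsum ⊢
    simp only [hL, AddSubgroup.index_top] at hsum hpos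
    omega
  · have hindex : L.index ≠ 1 := fun h => hL (AddSubgroup.index_eq_one.1 h)
    have hindex' : L.index ≠ 0 := AddSubgroup.index_ne_zero_of_finite
    rw [ncard_cosetPattern_eq_one hL] at hsum ⊢
    by_cases hdL : d ∈ L
    · rw [ncard_cosetPattern_eq_two_of_mem hdL] at hsum ⊢
      have := Nat.mul_le_mul_right (Nat.card L) (show 2 ≤ L.index by omega)
      omega
    · rw [ncard_cosetPattern_eq_two hdL] at hsum ⊢
      have := Nat.mul_le_mul_right (Nat.card L) (hd hdL)
      omega

theorem ncard_cosetPattern_of_index_eq_three [Finite A] (hd : d ∉ L) (hL : L.index = 3)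
    (e : Fin 3) : {a | cosetPattern L d a = e}.ncard = Nat.card L := by
  have hsum := sum_ncard_eq_natCard (cosetPattern L d)
  have hone := ncard_cosetPattern_eq_one (d := d) (L := L) (by rintro rfl; simp at hL)
  rw [← L.index_mul_card, hL, hone, ncard_cosetPattern_eq_two hd] at hsum
  match e with
  | 0 => omega
  | 1 => exact hone
  | 2 => exact ncard_cosetPattern_eq_two hd

theorem exists_notMem_of_ne_top (L : AddSubgroup A) :
    ∃ d, (L ≠ ⊤ → d ∉ L) ∧ ((∃ a, a + a ∉ L) → d + d ∉ L) := by
  by_cases h : ∃ a, a + a ∉ L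
  · obtain ⟨a, ha⟩ := h
    exact ⟨a, fun _ h => ha (add_mem h h), fun _ => ha⟩
  · by_cases hL : L = ⊤
    · exact ⟨0, fun h => absurd hL h, fun h' => absurd h' h⟩
    · obtain ⟨d, hd⟩ := not_forall.1 (mt (AddSubgroup.eq_top_iff' L).2 hL)
      exact ⟨d, fun _ => hd, fun h' => absurd h' h⟩

theorem add_self_mem_of_index_lt_three [Finite A] (hL : L.index < 3) (a : A) : a + a ∈ L := by
  have h0 : L.index ≠ 0 := AddSubgroup.index_ne_zero_of_finite
  obtain h1 | h2 : L.index = 1 ∨ L.index = 2 := by omega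
  · rw [AddSubgroup.index_eq_one.1 h1]
    exact AddSubgroup.mem_top _
  · exact AddSubgroup.add_self_mem_of_index_two h2 a

theorem exists_add_self_notMem_of_index_eq_three (hL : L.index = 3) : ∃ a, a + a ∉ L := by
  by_contra! h
  have htop : L = ⊤ := (AddSubgroup.eq_top_iff' L).2 fun a => by
    have h3 := L.nsmul_index_mem a
    rw [hL, succ_nsmul, two_nsmul] at h3
    exact (add_mem_cancel_left (h a)).1 h3
  rw [htop, AddSubgroup.index_top] at hL
  omega

end CosetPattern

section CrossPatterns

variable {ι A : Type*} [AddCommGroup A] {K : ι → AddSubgroup A} {F : ι → ι → A → Fin 3}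

/-- A system of colours between different orbits with stabilizers `K i`, which is rigid up to
colourings inside the orbits: see `IsCrossPattern.sub_sub_sub_mem`. -/
structure IsCrossPattern (K : ι → AddSubgroup A) (F : ι → ι → A → Fin 3) : Prop
    extends IsColourSystem K F where
  mem_of_periodic : ∀ i j, ∀ t, (∀ a, F i j (a + t) = F i j a) → t ∈ K i ⊔ K j
  exists_not_isReflectable : ∀ i j, i ≠ j → (∃ a, a + a ∉ K i ⊔ K j) →
    ∃ k, (k ≠ i ∧ ¬IsReflectable (F i k)) ∨ (k ≠ j ∧ ¬IsReflectable (F j k))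
  exists_coset : ∀ i j, i ≠ j → 4 ≤ (K i ⊔ K j).index → ∃ d u v, d ∉ K i ⊔ K j ∧
    (∀ a, F i j a = u ↔ a ∈ K i ⊔ K j) ∧ ∀ a, F i j a = v ↔ a - d ∈ K i ⊔ K j

/-- The numbers of colours between the points of two different orbits determine these orbits. -/
def DistinguishesOrbits (F : ι → ι → A → Fin 3) : Prop :=
  ∀ π : Equiv.Perm ι, (∀ i j, i ≠ j → ∀ e : Fin 3,
    {a | F (π i) (π j) a = e}.ncard = {a | F i j a = e}.ncard) → π = 1

theorem exists_antisymm_signedPair (δ : ι → ι → A) (hδ : ∀ i j, δ j i = δ i j) :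
    ∃ d : ι → ι → A, (∀ i j, d j i = -d i j) ∧ ∀ i j, i ≠ j → d i j ∈ signedPair (δ i j) := by
  classical
  let := IsWellOrder.linearOrder (WellOrderingRel (α := ι))
  refine ⟨fun i j => if i < j then δ i j else if j < i then -δ i j else 0, fun i j => ?_,
    fun i j hij => ?_⟩
  · rcases lt_trichotomy i j with h | rfl | h
    · simp [h, h.not_gt, hδ i j]
    · simp
    · simp [h, h.not_gt, hδ i j]
  · rcases hij.lt_or_gt with h | h
    · simp [h, signedPair]
    · simp [h, h.not_gt, signedPair]

/-- The coset pattern with an offset `d i j` between the orbits `i` and `j`, with colours shifted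
by the label of `s(i, j)`. -/
noncomputable def crossPattern (K : ι → AddSubgroup A) (d : ι → ι → A) (l : Sym2 ι → Fin 3)
    (i j : ι) (a : A) : Fin 3 :=
  cosetPattern (K i ⊔ K j) (d i j) a + l s(i, j)

/-- The offsets are nontrivial exactly for the pairs with index at least `4` and the pairs in `M`,
and they are of order two modulo `K i ⊔ K j` only if the whole quotient is of exponent two. -/
structure IsOffset (K : ι → AddSubgroup A) (M : SimpleGraph ι) (d : ι → ι → A) : Prop where
  antisymm : ∀ i j, d j i = -d i j
  notMem_iff : ∀ i j, i ≠ j → (d i j ∉ K i ⊔ K j ↔ 4 ≤ (K i ⊔ K j).index ∨ M.Adj i j)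
  add_self_notMem : ∀ i j, i ≠ j → d i j ∉ K i ⊔ K j → (∃ a, a + a ∉ K i ⊔ K j) →
    d i j + d i j ∉ K i ⊔ K j

theorem exists_isOffset (K : ι → AddSubgroup A) {M : SimpleGraph ι}
    (hM : ∀ i j, M.Adj i j → (K i ⊔ K j).index = 3) : ∃ d, IsOffset K M d := by
  classical
  choose δ hδ using exists_notMem_of_ne_top (A := A)
  obtain ⟨d, hanti, hd⟩ := exists_antisymm_signedPair
    (fun i j => if 4 ≤ (K i ⊔ K j).index ∨ M.Adj i j then δ (K i ⊔ K j) else 0)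
    fun i j => by rw [sup_comm, M.adj_comm]
  have hmem {i j : ι} {L : AddSubgroup A} (hij : i ≠ j) : (d i j ∈ L ↔
      (if 4 ≤ (K i ⊔ K j).index ∨ M.Adj i j then δ (K i ⊔ K j) else 0) ∈ L) ∧
      (d i j + d i j ∈ L ↔ (if 4 ≤ (K i ⊔ K j).index ∨ M.Adj i j then δ (K i ⊔ K j) else 0) +
        (if 4 ≤ (K i ⊔ K j).index ∨ M.Adj i j then δ (K i ⊔ K j) else 0) ∈ L) := by
    rcases hd i j hij with h | h <;> rw [h]
    · exact ⟨Iff.rfl, Iff.rfl⟩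
    · rw [← neg_add, neg_mem_iff, neg_mem_iff]
      exact ⟨Iff.rfl, Iff.rfl⟩
  refine ⟨d, hanti, fun i j hij => ?_, fun i j hij hdij h => ?_⟩
  · rw [(hmem hij).1]
    split_ifs with hbranch
    · refine iff_of_true ((hδ _).1 fun htop => ?_) hbranch
      rw [← AddSubgroup.index_eq_one] at htop
      rcases hbranch with h | h
      · omega
      · have := hM i j h
        omega
    · exact iff_of_false (not_not.2 (zero_mem _)) hbranch
  · rw [(hmem hij).1] at hdij
    rw [(hmem hij).2]
    split_ifs at hdij ⊢ with hbranch
    · exact (hδ _).2 h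
    · exact absurd (zero_mem _) hdij

section Finite

variable {M : SimpleGraph ι} {d : ι → ι → A} {l : Sym2 ι → Fin 3}

theorem IsOffset.isColourSystem (hd : IsOffset K M d) : IsColourSystem K (crossPattern K d l) where
  neg i j a := by
    rw [crossPattern, crossPattern, hd.antisymm, sup_comm, cosetPattern_neg, Sym2.eq_swap]
  add_mem i j a k hk := by
    rw [crossPattern, crossPattern, cosetPattern_add_mem (AddSubgroup.mem_sup_left hk)]

theorem IsOffset.not_isReflectable (hd : IsOffset K M d) {i j : ι} (hij : i ≠ j)
    (hmem : d i j ∉ K i ⊔ K j) (h : ∃ a, a + a ∉ K i ⊔ K j) :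
    ¬IsReflectable (crossPattern K d l i j) := by
  rintro ⟨t, ht⟩
  exact not_isReflectable_cosetPattern (hd.add_self_notMem i j hij hmem h)
    ⟨t, fun a => add_right_cancel (ht a)⟩

theorem IsOffset.isCrossPattern [Finite A] (hd : IsOffset K M d)
    (hM : ∀ i j, M.Adj i j → (K i ⊔ K j).index = 3)
    (hmax : ∀ i j, i ≠ j → (K i ⊔ K j).index = 3 → ∃ k, M.Adj i k ∨ M.Adj j k) :
    IsCrossPattern K (crossPattern K d l) where
  toIsColourSystem := hd.isColourSystem
  mem_of_periodic i j t ht := mem_of_cosetPattern_add_eq fun a => add_right_cancel (ht a)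
  exists_not_isReflectable i j hij h := by
    have hadj {i k : ι} (h : M.Adj i k) : k ≠ i ∧ ¬IsReflectable (crossPattern K d l i k) :=
      ⟨h.ne', hd.not_isReflectable h.ne ((hd.notMem_iff i k h.ne).2 (Or.inr h))
        (exists_add_self_notMem_of_index_eq_three (hM i k h))⟩
    obtain hlt | heq | hgt : (K i ⊔ K j).index < 3 ∨ (K i ⊔ K j).index = 3 ∨
        4 ≤ (K i ⊔ K j).index := by omega
    · exact absurd h (not_exists.2 fun a => not_not.2 (add_self_mem_of_index_lt_three hlt a))
    · obtain ⟨k, hk⟩ := hmax i j hij heq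
      exact ⟨k, hk.imp hadj hadj⟩
    · exact ⟨j, Or.inl ⟨hij.symm, hd.not_isReflectable hij
        ((hd.notMem_iff i j hij).2 (Or.inl hgt)) h⟩⟩
  exists_coset i j hij h := by
    have hmem := (hd.notMem_iff i j hij).2 (Or.inl h)
    refine ⟨d i j, 1 + l s(i, j), 2 + l s(i, j), hmem, fun a => ?_, fun a => ?_⟩
    · rw [crossPattern, add_left_inj, cosetPattern_eq_one_iff]
      exact fun htop => hmem (htop ▸ AddSubgroup.mem_top _)
    · rw [crossPattern, add_left_inj, cosetPattern_eq_two_iff hmem]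

theorem ncard_crossPattern (i j : ι) (e : Fin 3) :
    {a | crossPattern K d l i j a = e + l s(i, j)}.ncard =
      {a | cosetPattern (K i ⊔ K j) (d i j) a = e}.ncard := by
  simp only [crossPattern, add_left_inj]

theorem IsOffset.ncard_le_and_lt [Finite A] (hd : IsOffset K M d) {i j : ι} (hij : i ≠ j)
    (hadj : ¬M.Adj i j) :
    {a | crossPattern K d l i j a = 1 + l s(i, j)}.ncard ≤
        {a | crossPattern K d l i j a = 0 + l s(i, j)}.ncard ∧
      {a | crossPattern K d l i j a = 2 + l s(i, j)}.ncard <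
        {a | crossPattern K d l i j a = 0 + l s(i, j)}.ncard := by
  simp only [ncard_crossPattern]
  exact ncard_cosetPattern_le_and_lt fun h => ((hd.notMem_iff i j hij).1 h).resolve_right hadj

theorem IsOffset.adj_iff_ncard_eq [Finite A] (hd : IsOffset K M d)
    (hM : ∀ i j, M.Adj i j → (K i ⊔ K j).index = 3) {i j : ι} (hij : i ≠ j) :
    M.Adj i j ↔ ∀ e e', {a | crossPattern K d l i j a = e}.ncard =
      {a | crossPattern K d l i j a = e'}.ncard := by
  refine ⟨fun h => ?_, fun h => ?_⟩
  · have hcard (e : Fin 3) : {a | crossPattern K d l i j a = e}.ncard =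
        Nat.card (K i ⊔ K j : AddSubgroup A) := by
      rw [← sub_add_cancel e (l s(i, j)), ncard_crossPattern]
      exact ncard_cosetPattern_of_index_eq_three ((hd.notMem_iff i j hij).2 (Or.inr h)) (hM i j h) _
    exact fun e e' => (hcard e).trans (hcard e').symm
  · by_contra hadj
    exact (hd.ncard_le_and_lt hij hadj).2.ne (h _ _)

theorem eq_of_le_of_lt {N : Fin 3 → ℕ} {p q : Fin 3} (hp1 : N (1 + p) ≤ N (0 + p))
    (hp2 : N (2 + p) < N (0 + p)) (hq1 : N (1 + q) ≤ N (0 + q)) (hq2 : N (2 + q) < N (0 + q)) :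
    p = q := by
  fin_cases p <;> fin_cases q <;> simp at hp1 hp2 hq1 hq2 ⊢ <;> omega

theorem IsOffset.distinguishesOrbits [Fintype ι] [Finite A] (hd : IsOffset K M d)
    (hM : ∀ i j, M.Adj i j → (K i ⊔ K j).index = 3) (hl : IsRigidLabelling M Finset.univ l) :
    DistinguishesOrbits (crossPattern K d l) := by
  intro π hπ
  have hadj {i j : ι} (hij : i ≠ j) : M.Adj (π i) (π j) ↔ M.Adj i j := by
    rw [hd.adj_iff_ncard_eq (l := l) hM hij,
      hd.adj_iff_ncard_eq (l := l) hM (π.injective.ne hij)]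
    simp only [hπ i j hij]
  refine Equiv.ext fun i => hl π (fun _ _ => Finset.mem_coe.2 (Finset.mem_univ _))
    (fun i _ j _ => ?_) (fun i _ j _ hij hMij => ?_) i (Finset.mem_univ i)
  · by_cases hij : i = j
    · simp [hij]
    · exact hadj hij
  · have h := hd.ncard_le_and_lt (l := l) hij hMij
    have h' := hd.ncard_le_and_lt (l := l) (π.injective.ne hij) (mt (hadj hij).1 hMij)
    rw [hπ i j hij, hπ i j hij, hπ i j hij] at h'
    exact eq_of_le_of_lt (N := fun e => {a | crossPattern K d l i j a = e}.ncard)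
      h'.1 h'.2 h.1 h.2

theorem exists_isCrossPattern [Finite ι] [Finite A] (K : ι → AddSubgroup A) :
    ∃ F, IsCrossPattern K F ∧ (3 ≤ Nat.card ι → DistinguishesOrbits F) := by
  have := Fintype.ofFinite ι
  let R : SimpleGraph ι :=
    { Adj := fun i j => i ≠ j ∧ (K i ⊔ K j).index = 3
      symm := ⟨fun i j h => ⟨h.1.symm, sup_comm (K i) (K j) ▸ h.2⟩⟩
      loopless := ⟨fun i h => h.1 rfl⟩ }
  obtain ⟨M, hMR, hM, hmax⟩ := exists_maximal_isPartialMatching R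
  have hM3 : ∀ i j, M.Adj i j → (K i ⊔ K j).index = 3 := fun i j h => (hMR h).2
  obtain ⟨d, hd⟩ := exists_isOffset K hM3
  by_cases hι : 3 ≤ Nat.card ι
  · rw [Nat.card_eq_fintype_card] at hι
    obtain ⟨l, hl⟩ := hM.exists_isRigidLabelling Finset.univ hι
    exact ⟨crossPattern K d l, hd.isCrossPattern hM3 fun i j hij h => hmax i j ⟨hij, h⟩,
      fun _ => hd.distinguishesOrbits hM3 hl⟩
  · exact ⟨crossPattern K d 0, hd.isCrossPattern hM3 fun i j hij h => hmax i j ⟨hij, h⟩,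
      fun h => absurd h hι⟩

end Finite

section Rigidity

variable {D : Type*} {G : A → D} {L : AddSubgroup A} {ε δ : ℤˣ} {s t T : A}

theorem add_self_mem_of_ne (hG : ∀ t, (∀ a, G (a + t) = G a) → t ∈ L)
    (h : ∀ a b, G (δ • b - ε • a + T) = G (b - a)) (hne : ε ≠ δ) (x : A) : x + x ∈ L := by
  rcases Int.units_eq_one_or ε with rfl | rfl <;> rcases Int.units_eq_one_or δ with rfl | rfl
  · exact absurd rfl hne
  · refine hG _ fun a => ?_
    have h1 := h (-x) (T - a - x)
    have h2 := h 0 (T - a)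
    simp only [Units.neg_smul, one_smul] at h1 h2
    convert! h1.trans ((congrArg G (by abel)).trans h2.symm) using 2 <;> abel
  · refine hG _ fun a => ?_
    have h1 := h x (a - T + x)
    have h2 := h 0 (a - T)
    simp only [Units.neg_smul, one_smul] at h1 h2
    convert! h1.trans ((congrArg G (by abel)).trans h2.symm) using 2 <;> abel
  · exact absurd rfl hne

theorem isReflectable_of_eq_neg_one (h : ∀ a b, G (δ • b - ε • a + T) = G (b - a))
    (hsign : ε = -1 ∨ δ = -1) : IsReflectable G := by
  refine ⟨T, fun a => ?_⟩
  rcases Int.units_eq_one_or δ with rfl | rfl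
  · obtain rfl := hsign.resolve_right (by decide)
    simpa [add_comm] using h (-a) 0
  · simpa using h 0 a

theorem IsCrossPattern.sub_mem_of_smul_sub_mem (hF : IsCrossPattern K F) {i j : ι}
    (h : ∀ a b, F i j (δ • b - ε • a + T) = F i j (b - a))
    (hsign : ∀ a, ε • a - a ∈ K i ⊔ K j ∧ δ • a - a ∈ K i ⊔ K j) : T ∈ K i ⊔ K j := by
  refine hF.mem_of_periodic i j T fun a => ?_
  have h0 := h 0 a
  rw [smul_zero, sub_zero, sub_zero] at h0
  rw [← h0]
  refine hF.congr ?_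
  convert! neg_mem (hsign a).2 using 1
  abel

/-- A permutation which acts by signed translations on the orbits and preserves a cross pattern
agrees on any two different orbits with the action of an element of the group. -/
theorem IsCrossPattern.sub_sub_sub_mem (hF : IsCrossPattern K F) {f : ι → A → A}
    (hsign : ∀ i, IsSignedShift (K i) (f i))
    (hpres : ∀ i j, i ≠ j → ∀ a b, F i j (f j b - f i a) = F i j (b - a)) {i j : ι} (hij : i ≠ j)
    (a b : A) : (f j b - b) - (f i a - a) ∈ K i ⊔ K j := by
  choose ε t ht using hsign
  have hshift {i j : ι} (a b : A) :
      (ε j • b - ε i • a + (t j - t i)) - (f j b - f i a) ∈ K i ⊔ K j := by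
    convert! sub_mem (AddSubgroup.mem_sup_left (ht i a)) (AddSubgroup.mem_sup_right (ht j b))
      using 1
    abel
  have hcol {i j : ι} (hij : i ≠ j) (a b : A) :
      F i j (ε j • b - ε i • a + (t j - t i)) = F i j (b - a) :=
    (hF.congr (hshift a b)).trans (hpres i j hij a b)
  have hplus : ∀ a, ε i • a - a ∈ K i ⊔ K j ∧ ε j • a - a ∈ K i ⊔ K j := by
    by_cases h : ∃ a, a + a ∉ K i ⊔ K j
    · have heq : ε i = ε j := by
        by_contra hne
        obtain ⟨a, ha⟩ := h
        exact ha (add_self_mem_of_ne (hF.mem_of_periodic i j) (hcol hij) hne a)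
      suffices ε i = 1 by simp [← heq, this]
      refine (Int.units_eq_one_or _).resolve_right fun hneg => ?_
      obtain ⟨k, ⟨hki, hk⟩ | ⟨hkj, hk⟩⟩ := hF.exists_not_isReflectable i j hij h
      · exact hk (isReflectable_of_eq_neg_one (hcol hki.symm) (Or.inl hneg))
      · exact hk (isReflectable_of_eq_neg_one (hcol hkj.symm) (Or.inl (heq ▸ hneg)))
    · push Not at h
      have hunit (u : ℤˣ) (a : A) : u • a - a ∈ K i ⊔ K j := by
        rcases Int.units_eq_one_or u with rfl | rfl
        · simp
        · rw [Units.neg_smul, one_smul, ← neg_add', neg_mem_iff]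
          exact h a
      exact fun a => ⟨hunit _ a, hunit _ a⟩
  have hT := hF.sub_mem_of_smul_sub_mem (hcol hij) hplus
  convert! sub_mem (add_mem (sub_mem (hplus b).2 (hplus a).1) hT) (hshift (i := i) a b) using 1
  abel

end Rigidity

end CrossPatterns

section ElementaryPlanes

theorem eq_top_of_neg_sub_add_mem {A : Type*} [AddCommGroup A] {K : AddSubgroup A} {g : A}
    (h3 : ∀ a, 3 • a ∈ K) (hg : ∀ a, -a - (g + a) ∈ K) : K = ⊤ :=
  (AddSubgroup.eq_top_iff' K).2 fun a => by
    convert! sub_mem (add_mem (h3 a) (hg a)) (hg 0) using 1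
    abel

theorem IsPairClosed.exists_sup_ne_top {A X : Type*} [AddCommGroup A] [AddAction A X]
    (hcl : IsPairClosed A X) {i : Orbits A X}
    (h3 : IsElementaryPlane 3 (A ⧸ orbitStabilizer i)) :
    ∃ j, j ≠ i ∧ orbitStabilizer i ⊔ orbitStabilizer j ≠ ⊤ := by
  classical
  by_contra! hcon
  let f : Orbits A X → A → A := Function.update (fun _ => id) i Neg.neg
  have hfi : f i = Neg.neg := Function.update_self ..
  have hfj {j : Orbits A X} (hj : j ≠ i) : f j = id := Function.update_of_ne hj ..
  have hf (j : Orbits A X) : ∃ ε : ℤˣ, ∀ a, f j a = ε • a := by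
    by_cases hj : j = i
    · exact ⟨-1, fun a => by rw [hj, hfi, Units.neg_smul, one_smul]⟩
    · exact ⟨1, fun a => by rw [hfj hj, one_smul, id]⟩
  obtain ⟨σ, hσ⟩ := exists_perm_of_isQuotientBijection (f := f) fun j => by
    obtain ⟨ε, hε⟩ := hf j
    refine ⟨fun a b => ?_, fun b => ⟨ε⁻¹ • b, ?_⟩⟩
    · rw [hε, hε, ← smul_sub]
      rcases Int.units_eq_one_or ε with rfl | rfl
      · rw [one_smul]
      · rw [Units.neg_smul, one_smul, neg_mem_iff]
    · rw [hε, smul_inv_smul, sub_self]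
      exact zero_mem _
  obtain ⟨g, hg⟩ := hcl.exists_vadd_eq_of_isSignedShift hσ
    (fun j => (hf j).imp fun ε hε => ⟨0, fun a => by rw [hε, add_zero, sub_self]; exact zero_mem _⟩)
    fun j k hjk a b => by
      by_cases hj : j = i
      · rw [hj, hcon k (hj ▸ hjk.symm)]
        exact AddSubgroup.mem_top _
      · by_cases hk : k = i
        · rw [hk, sup_comm, hcon j hj]
          exact AddSubgroup.mem_top _
        · simp [hfj hj, hfj hk]
  have hshift (a : A) : -a - (g + a) ∈ orbitStabilizer i := by
    rw [← orbitPoint_eq_iff, ← vadd_orbitPoint, hg, hσ, hfi]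
  have htop : orbitStabilizer i = ⊤ := eq_top_of_neg_sub_add_mem (fun a => by
    rw [← QuotientAddGroup.eq_zero_iff, QuotientAddGroup.mk_nsmul, h3.nsmul_eq_zero]) hshift
  have hcard : (orbitStabilizer i).index = 3 ^ 2 := h3.card_eq
  simp [htop] at hcard

theorem IsElementaryPlane.eq_zero_or_mem_signedPair {p : ℕ} [Fact p.Prime] (hp : p ≤ 3)
    {B : Type*} [AddCommGroup B] (hB : IsElementaryPlane p B) {H : AddSubgroup B} (hH : H ≠ ⊤)
    {h x : B} (hh : h ∈ H) (h0 : h ≠ 0) (hx : x ∈ H) : x = 0 ∨ x ∈ signedPair h := by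
  classical
  have hpp : p.Prime := Fact.out
  have hcard := hB.card_eq
  have : Finite B := Nat.finite_of_card_ne_zero (hcard ▸ pow_ne_zero _ hpp.ne_zero)
  have hcardH : Nat.card H = p := by
    obtain ⟨k, hk, hk'⟩ := (Nat.dvd_prime_pow hpp).1 (hcard ▸ H.card_addSubgroup_dvd_card)
    interval_cases k
    · rw [pow_zero, AddSubgroup.card_eq_one] at hk'
      rw [hk', AddSubgroup.mem_bot] at hh
      exact absurd hh h0
    · rwa [pow_one] at hk'
    · exact absurd (AddSubgroup.eq_top_of_card_eq H (by rw [hk', hcard])) hH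
  have horder : addOrderOf h = p := addOrderOf_eq_prime (hB.nsmul_eq_zero h) h0
  have hmem : (⟨x, hx⟩ : H) ∈ AddSubgroup.zmultiples (⟨h, hh⟩ : H) :=
    mem_zmultiples_of_prime_card hcardH (by simpa using h0)
  rw [mem_zmultiples_iff_mem_range_addOrderOf, AddSubgroup.addOrderOf_mk, horder] at hmem
  simp only [Finset.mem_image, Finset.mem_range, Subtype.ext_iff] at hmem
  obtain ⟨m, hm, rfl⟩ := hmem
  have h2 : m < 3 := hm.trans_le hp
  interval_cases m
  · exact Or.inl (zero_nsmul h)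
  · exact Or.inr (Or.inl (one_nsmul h))
  · obtain rfl : p = 3 := by omega
    refine Or.inr (Or.inr (eq_neg_of_add_eq_zero_left ?_))
    rw [← hB.nsmul_eq_zero h]
    exact (succ_nsmul h 2).symm

variable {ι A : Type*} [AddCommGroup A] {K : ι → AddSubgroup A} {F : ι → ι → A → Fin 3}
  {f : ι → A → A} {i j : ι}

/-- The lifts to `A` of the permutations that map each orbit `A ⧸ K i` to itself and preserve the
colours `F` between different orbits. -/
structure IsCrossAutomorphism (K : ι → AddSubgroup A) (F : ι → ι → A → Fin 3) (f : ι → A → A) :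
    Prop where
  isQuotientBijection : ∀ i, IsQuotientBijection (K i) (f i)
  apply_sub : ∀ i j, i ≠ j → ∀ a b, F i j (f j b - f i a) = F i j (b - a)

/-- A colouring of the orbit `A ⧸ K i` which is rigid in the presence of the colours `F` between
different orbits: the latter may help to preserve the relation `E`. -/
structure IsInternalColouring (K : ι → AddSubgroup A) (F : ι → ι → A → Fin 3) (i : ι)
    (E : Set (A ⧸ K i)) (c : A ⧸ K i → Fin 4) : Prop extends IsRigidColouring E c where
  mem_of_isCrossAutomorphism : ∀ f, IsCrossAutomorphism K F f → ∀ a b,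
    ((b - a : A) : A ⧸ K i) ∈ E → ((f i b - f i a : A) : A ⧸ K i) ∈ E

theorem coe_mem_signedPair_iff {K : AddSubgroup A} {a h : A} :
    (a : A ⧸ K) ∈ signedPair (h : A ⧸ K) ↔ a - h ∈ K ∨ -a - h ∈ K := by
  rw [signedPair, Set.mem_ofPred_eq, eq_neg_iff_add_eq_zero, ← sub_eq_zero,
    ← QuotientAddGroup.mk_sub, ← QuotientAddGroup.mk_add, QuotientAddGroup.eq_zero_iff,
    QuotientAddGroup.eq_zero_iff, ← neg_add', neg_mem_iff]

theorem IsRigidColouring.isInternalColouring_of_sup_eq {d : A} {c : A ⧸ K i → Fin 4}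
    (hc : IsRigidColouring (signedPair (d : A ⧸ K i)) c) (hij : i ≠ j) (hsup : K i ⊔ K j = K i)
    {u v : Fin 3} (hu : ∀ a, F i j a = u ↔ a ∈ K i ⊔ K j)
    (hv : ∀ a, F i j a = v ↔ a - d ∈ K i ⊔ K j) :
    IsInternalColouring K F i (signedPair (d : A ⧸ K i)) c where
  toIsRigidColouring := hc
  mem_of_isCrossAutomorphism f hf a b := by
    rw [hsup] at hu hv
    have hsub (a b : A) (h : b - a - d ∈ K i) : f i b - f i a - d ∈ K i := by
      have hb : f j b - f i b ∈ K i := by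
        rw [← hu, hf.apply_sub i j hij, hu, sub_self]
        exact zero_mem _
      have hab : f j b - f i a - d ∈ K i := by
        rw [← hv, hf.apply_sub i j hij, hv]
        exact h
      convert! sub_mem hab hb using 1
      abel
    rw [coe_mem_signedPair_iff, coe_mem_signedPair_iff, neg_sub, neg_sub]
    exact Or.imp (hsub a b) (hsub b a)

theorem IsCrossPattern.sub_mem_sup (hF : IsCrossPattern K F) (hf : IsCrossAutomorphism K F f)
    (hij : i ≠ j) {a b : A} (h : b - a ∈ K i ⊔ K j) : f i b - f i a ∈ K i ⊔ K j := by
  refine hF.mem_of_periodic i j _ fun x => ?_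
  obtain ⟨z, hz⟩ := (hf.isQuotientBijection j).exists_sub_mem (x + f i b)
  have hcongr (y w : A) (hyw : y - w = x + f i b - f j z) : F i j y = F i j w :=
    hF.congr (hyw ▸ AddSubgroup.mem_sup_right hz)
  calc F i j (x + (f i b - f i a)) = F i j (f j z - f i a) := hcongr _ _ (by abel)
    _ = F i j (z - a) := hf.apply_sub i j hij a z
    _ = F i j (z - b) := hF.congr (by convert! h using 1; abel)
    _ = F i j (f j z - f i b) := (hf.apply_sub i j hij b z).symm
    _ = F i j x := (hcongr _ _ (by abel)).symm

theorem IsCrossPattern.isInternalColouring_of_sup_ne_top (hF : IsCrossPattern K F) (hij : i ≠ j)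
    {p : ℕ} [Fact p.Prime] (hp : p ≤ 3) (hB : IsElementaryPlane p (A ⧸ K i))
    (hsup : K i ⊔ K j ≠ ⊤) {h : A} (hh : h ∈ K i ⊔ K j) (h0 : (h : A ⧸ K i) ≠ 0)
    {c : A ⧸ K i → Fin 4} (hc : IsRigidColouring (signedPair (h : A ⧸ K i)) c) :
    IsInternalColouring K F i (signedPair (h : A ⧸ K i)) c where
  toIsRigidColouring := hc
  mem_of_isCrossAutomorphism f hf a b hab := by
    let H : AddSubgroup (A ⧸ K i) := (K i ⊔ K j).map (QuotientAddGroup.mk' (K i))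
    have hcomap : H.comap (QuotientAddGroup.mk' (K i)) = K i ⊔ K j := by
      rw [AddSubgroup.comap_map_eq, QuotientAddGroup.ker_mk', sup_comm, ← sup_assoc, sup_idem]
    have hmem {x : A} : (x : A ⧸ K i) ∈ H ↔ x ∈ K i ⊔ K j := by rw [← hcomap]; rfl
    have hH : H ≠ ⊤ := fun htop => hsup (by rw [← hcomap, htop, AddSubgroup.comap_top])
    have hmem_ab : ((b - a : A) : A ⧸ K i) ∈ H := by
      rcases hab with heq | heq <;> rw [heq]
      · exact hmem.2 hh
      · exact neg_mem (hmem.2 hh)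
    have hne_ab : ((b - a : A) : A ⧸ K i) ≠ 0 := by
      rcases hab with heq | heq <;> rw [heq]
      · exact h0
      · exact neg_ne_zero.2 h0
    refine (hB.eq_zero_or_mem_signedPair hp hH (hmem.2 hh) h0
      (hmem.2 (hF.sub_mem_sup hf hij (hmem.1 hmem_ab)))).resolve_left fun hzero => hne_ab ?_
    rw [QuotientAddGroup.eq_zero_iff] at hzero ⊢
    exact ((hf.isQuotientBijection i).sub_mem_iff a b).1 hzero

theorem IsCrossPattern.exists_isInternalColouring_of_isElementaryPlane (hF : IsCrossPattern K F)
    {p : ℕ} [Fact p.Prime] (hp : p ≤ 3) (hB : IsElementaryPlane p (A ⧸ K i)) (hij : i ≠ j)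
    (hsup : K i ⊔ K j ≠ ⊤) : ∃ E c, IsInternalColouring K F i E c := by
  by_cases heq : K i ⊔ K j = K i
  · have hindex : 4 ≤ (K i ⊔ K j).index := by
      rw [heq, show (K i).index = p ^ 2 from hB.card_eq]
      exact Nat.pow_le_pow_left (Fact.out : p.Prime).two_le 2
    obtain ⟨d, u, v, hd, hu, hv⟩ := hF.exists_coset i j hij hindex
    rw [heq, ← QuotientAddGroup.eq_zero_iff] at hd
    obtain ⟨c, hc⟩ := exists_isRigidColouring_signedPair hB hd
    exact ⟨_, c, hc.isInternalColouring_of_sup_eq hij heq hu hv⟩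
  · obtain ⟨h, hh, h0⟩ := SetLike.exists_of_lt (le_sup_left.lt_of_ne' heq)
    rw [← QuotientAddGroup.eq_zero_iff] at h0
    obtain ⟨c, hc⟩ := exists_isRigidColouring_signedPair hB h0
    exact ⟨_, c, hF.isInternalColouring_of_sup_ne_top hij hp hB hsup hh h0 hc⟩

theorem IsCrossPattern.exists_isInternalColouring [Finite A] (hF : IsCrossPattern K F)
    (h : ∀ p ∈ ({2, 3} : Set ℕ), IsElementaryPlane p (A ⧸ K i) → ∃ j, j ≠ i ∧ K i ⊔ K j ≠ ⊤) :
    ∃ E c, IsInternalColouring K F i E c := by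
  by_cases h2 : IsElementaryPlane 2 (A ⧸ K i)
  · obtain ⟨j, hj, hsup⟩ := h 2 (by simp) h2
    exact hF.exists_isInternalColouring_of_isElementaryPlane (by norm_num) h2 hj.symm hsup
  by_cases h3 : IsElementaryPlane 3 (A ⧸ K i)
  · obtain ⟨j, hj, hsup⟩ := h 3 (by simp) h3
    exact hF.exists_isInternalColouring_of_isElementaryPlane le_rfl h3 hj.symm hsup
  · obtain ⟨c, hc⟩ := exists_isRigidColouring_univ h2 h3
    exact ⟨_, c, hc, fun _ _ _ _ _ => Set.mem_univ _⟩

end ElementaryPlanes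

section PatternColourings

variable {A X : Type*} [AddCommGroup A] [AddAction A X] {F : Orbits A X → Orbits A X → A → Fin 3}
  {c : (i : Orbits A X) → A ⧸ orbitStabilizer i → Fin 4} {γ : Sym2 X → Fin 4}

/-- `γ` is the colouring of the pairs in `X` which is given by `c i` inside the orbit `i`, and by
`F` between different orbits. -/
structure IsPatternColouring (F : Orbits A X → Orbits A X → A → Fin 3)
    (c : (i : Orbits A X) → A ⧸ orbitStabilizer i → Fin 4) (γ : Sym2 X → Fin 4) : Prop where
  internal : ∀ i a b, γ s(orbitPoint i a, orbitPoint i b) = c i (b - a : A)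
  cross : ∀ i j, i ≠ j → ∀ a b, γ s(orbitPoint i a, orbitPoint j b) = (F i j (b - a)).castSucc

theorem IsColourSystem.exists_isPatternColouring (hF : IsColourSystem orbitStabilizer F)
    (hc : ∀ i x, c i (-x) = c i x) : ∃ γ, IsPatternColouring F c γ := by
  classical
  let G (i j : Orbits A X) (a : A) : Fin 4 := if i = j then c i a else (F i j a).castSucc
  have hGc (i : Orbits A X) (a : A) : G i i a = c i a := if_pos rfl
  have hGF {i j : Orbits A X} (hij : i ≠ j) (a : A) : G i j a = (F i j a).castSucc := if_neg hij
  have hG : IsColourSystem orbitStabilizer G := by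
    refine ⟨fun i j a => ?_, fun i j a k hk => ?_⟩ <;> by_cases hij : i = j
    · rw [hij, hGc, hGc, QuotientAddGroup.mk_neg, hc]
    · rw [hGF hij, hGF (Ne.symm hij), hF.neg]
    · rw [← hij, hGc, hGc, QuotientAddGroup.mk_add_of_mem _ hk]
    · rw [hGF hij, hGF hij, hF.add_mem i j a k hk]
  obtain ⟨γ, hγ⟩ := hG.exists_colouring
  exact ⟨γ, fun i a b => by rw [hγ, hGc], fun i j hij a b => by rw [hγ, hGF hij]⟩

theorem IsPatternColouring.apply_vadd (hγ : IsPatternColouring F c γ) (g : A) (x y : X) :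
    γ s(g +ᵥ x, g +ᵥ y) = γ s(x, y) := by
  obtain ⟨i, a, rfl⟩ := exists_exists_orbitPoint_eq (A := A) x
  obtain ⟨j, b, rfl⟩ := exists_exists_orbitPoint_eq (A := A) y
  rw [vadd_orbitPoint, vadd_orbitPoint]
  by_cases hij : i = j
  · subst hij
    rw [hγ.internal, hγ.internal, add_sub_add_left_eq_sub]
  · rw [hγ.cross i j hij, hγ.cross i j hij, add_sub_add_left_eq_sub]

theorem IsPatternColouring.exists_vadd_eq (hcl : IsPairClosed A X)
    (hF : IsCrossPattern orbitStabilizer F) {E : (i : Orbits A X) → Set (A ⧸ orbitStabilizer i)}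
    (hc : ∀ i, IsInternalColouring orbitStabilizer F i (E i) (c i))
    {s : Orbits A X → Equiv.Perm (Fin 4)} (hγ : IsPatternColouring F (fun i x => s i (c i x)) γ)
    {σ : Equiv.Perm X} (hσ : ∀ x y, γ s(σ x, σ y) = γ s(x, y))
    (horbit : ∀ x, orbitIndex A (σ x) = orbitIndex A x) : ∃ g : A, ∀ x, g +ᵥ x = σ x := by
  choose f hf using fun i (a : A) =>
    exists_orbitPoint_eq ((horbit (orbitPoint i a)).trans (orbitIndex_orbitPoint i a))
  replace hf : ∀ i a, σ (orbitPoint i a) = orbitPoint i (f i a) := fun i a => (hf i a).symm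
  have hcross : IsCrossAutomorphism orbitStabilizer F f := by
    refine ⟨isQuotientBijection_of_perm hf, fun i j hij a b => ?_⟩
    have h := hσ (orbitPoint i a) (orbitPoint j b)
    rwa [hf, hf, hγ.cross i j hij, hγ.cross i j hij, Fin.castSucc_inj] at h
  have hsign (i : Orbits A X) : IsSignedShift (orbitStabilizer i) (f i) := by
    refine (hc i).isSignedShift (hcross.isQuotientBijection i) (fun a b => (s i).injective ?_)
      ((hc i).mem_of_isCrossAutomorphism f hcross)
    rw [← hγ.internal, ← hγ.internal, ← hf, ← hf, hσ]
  exact hcl.exists_vadd_eq_of_isSignedShift hf hsign fun i j hij =>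
    hF.sub_sub_sub_mem hsign hcross.apply_sub hij

end PatternColourings

section Counting

variable {A X : Type*} [AddCommGroup A] [AddAction A X]

theorem ncard_setOf_quotient_mul_card (K : AddSubgroup A) (P : A ⧸ K → Prop) :
    {q | P q}.ncard * Nat.card K = {a : A | P a}.ncard := by
  rw [mul_comm]
  exact (Nat.card_prod _ _).symm.trans
    (Nat.card_congr (QuotientAddGroup.preimageMkEquivAddSubgroupProdSet K {q | P q}).symm)

theorem ncard_orbitIndex_eq_and (i : Orbits A X) (P : X → Prop) :
    {y | orbitIndex A y = i ∧ P y}.ncard =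
      {q : A ⧸ orbitStabilizer i | P (AddAction.ofQuotientStabilizer A i.out q)}.ncard := by
  refine Eq.trans ?_
    (Set.ncard_image_of_injective _ (AddAction.injective_ofQuotientStabilizer A i.out))
  congr 1
  ext y
  constructor
  · rintro ⟨hy, hP⟩
    obtain ⟨a, rfl⟩ := exists_orbitPoint_eq hy
    exact ⟨(a : A ⧸ orbitStabilizer i), hP, rfl⟩
  · rintro ⟨q, hP, rfl⟩
    obtain ⟨a, rfl⟩ := QuotientAddGroup.mk_surjective q
    exact ⟨orbitIndex_orbitPoint i a, hP⟩

theorem ncard_orbitIndex_eq (i : Orbits A X) :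
    {y | orbitIndex A y = i}.ncard = (orbitStabilizer i).index := by
  rw [AddSubgroup.index]
  simpa [Set.ncard_univ] using ncard_orbitIndex_eq_and i fun _ => True

theorem orbitIndex_apply_eq_iff [Finite X] {i j : Orbits A X} {σ : Equiv.Perm X}
    (hσ : ∀ y, orbitIndex A y = i → orbitIndex A (σ y) = j)
    (hle : (orbitStabilizer j).index ≤ (orbitStabilizer i).index) (y : X) :
    orbitIndex A (σ y) = j ↔ orbitIndex A y = i := by
  have himage : σ '' {y | orbitIndex A y = i} = {y | orbitIndex A y = j} := by
    refine Set.eq_of_subset_of_ncard_le (Set.image_subset_iff.2 hσ) ?_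
    rwa [Set.ncard_image_of_injective _ σ.injective, ncard_orbitIndex_eq, ncard_orbitIndex_eq]
  exact (Set.ext_iff.1 himage (σ y)).symm.trans σ.injective.mem_set_image

theorem ncard_orbitIndex_eq_and_apply {i j : Orbits A X} {σ : Equiv.Perm X}
    (hσ : ∀ y, orbitIndex A (σ y) = j ↔ orbitIndex A y = i) (P : X → Prop) :
    {y | orbitIndex A y = j ∧ P y}.ncard = {y | orbitIndex A y = i ∧ P (σ y)}.ncard := by
  rw [← Set.ncard_image_of_injective {y | orbitIndex A y = i ∧ P (σ y)} σ.injective]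
  congr 1
  ext y
  obtain ⟨z, rfl⟩ := σ.surjective y
  rw [σ.injective.mem_set_image]
  exact and_congr_left fun _ => hσ z

theorem index_orbitStabilizer_eq {i j : Orbits A X} {σ : Equiv.Perm X}
    (hσ : ∀ y, orbitIndex A (σ y) = j ↔ orbitIndex A y = i) :
    (orbitStabilizer j).index = (orbitStabilizer i).index := by
  simpa [ncard_orbitIndex_eq] using ncard_orbitIndex_eq_and_apply hσ fun _ => True

variable {F : Orbits A X → Orbits A X → A → Fin 3}
  {c : (i : Orbits A X) → A ⧸ orbitStabilizer i → Fin 4} {γ : Sym2 X → Fin 4} {i j k : Orbits A X}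

theorem IsPatternColouring.ncard_internal (hγ : IsPatternColouring F c γ) {x : X}
    (hx : orbitIndex A x = i) (e : Fin 4) :
    {y | orbitIndex A y = i ∧ γ s(x, y) = e}.ncard = {q | c i q = e}.ncard := by
  obtain ⟨a, rfl⟩ := exists_orbitPoint_eq hx
  rw [ncard_orbitIndex_eq_and i fun y => γ s(orbitPoint i a, y) = e,
    ← ncard_sub_right_preimage {q | c i q = e} (a : A ⧸ orbitStabilizer i)]
  congr 1
  ext q
  obtain ⟨b, rfl⟩ := QuotientAddGroup.mk_surjective q
  exact Eq.congr_left (hγ.internal i a b)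

theorem IsPatternColouring.ncard_cross (hγ : IsPatternColouring F c γ) (hij : i ≠ j) {x : X}
    (hx : orbitIndex A x = i) (e : Fin 3) :
    {y | orbitIndex A y = j ∧ γ s(x, y) = e.castSucc}.ncard * Nat.card (orbitStabilizer j) =
      {a | F i j a = e}.ncard := by
  obtain ⟨a, rfl⟩ := exists_orbitPoint_eq hx
  rw [ncard_orbitIndex_eq_and j fun y => γ s(orbitPoint i a, y) = e.castSucc,
    ncard_setOf_quotient_mul_card, ← ncard_sub_right_preimage {b | F i j b = e} a]
  congr 1
  ext b
  exact (Eq.congr_left (hγ.cross i j hij a b)).trans Fin.castSucc_inj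

end Counting

section OrbitPermutations

variable {A X : Type*} [AddCommGroup A] [AddAction A X] {F : Orbits A X → Orbits A X → A → Fin 3}
  {c : (i : Orbits A X) → A ⧸ orbitStabilizer i → Fin 4} {γ : Sym2 X → Fin 4} {i j k : Orbits A X}
  {σ : Equiv.Perm X}

theorem IsPatternColouring.orbitIndex_eq (hγ : IsPatternColouring F c γ) {x y : X}
    (h : γ s(x, y) = 3) : orbitIndex A x = orbitIndex A y := by
  by_contra hne
  obtain ⟨a, ha⟩ := exists_orbitPoint_eq (A := A) (x := x) rfl
  obtain ⟨b, hb⟩ := exists_orbitPoint_eq (A := A) (x := y) rfl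
  rw [← ha, ← hb, hγ.cross _ _ hne] at h
  exact (Fin.castSucc_lt_last _).ne h

theorem IsPatternColouring.orbitIndex_apply_eq (hγ : IsPatternColouring F c γ)
    (hσ : ∀ x y, γ s(σ x, σ y) = γ s(x, y)) (htop : AddSubgroup.closure {q | c i q = 3} = ⊤)
    {x y : X} (hx : orbitIndex A x = i) (hy : orbitIndex A y = i) :
    orbitIndex A (σ x) = orbitIndex A (σ y) := by
  obtain ⟨a, rfl⟩ := exists_orbitPoint_eq hx
  obtain ⟨b, rfl⟩ := exists_orbitPoint_eq hy
  suffices h : ∀ q ∈ AddSubgroup.closure {q | c i q = 3}, ∀ a b : A,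
      ((b - a : A) : A ⧸ orbitStabilizer i) = q →
        orbitIndex A (σ (orbitPoint i a)) = orbitIndex A (σ (orbitPoint i b)) from
    h _ (htop ▸ AddSubgroup.mem_top _) a b rfl
  intro q hq
  induction hq using AddSubgroup.closure_induction with
  | mem q hq =>
    rintro a b rfl
    exact hγ.orbitIndex_eq (by rw [hσ, hγ.internal]; exact hq)
  | zero =>
    intro a b hab
    rw [orbitPoint_eq_iff.2 ((QuotientAddGroup.eq_zero_iff _).1 hab)]
  | add q r _ _ ihq ihr =>
    intro a b hab
    obtain ⟨h, rfl⟩ := QuotientAddGroup.mk_surjective q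
    refine (ihq a (a + h) (by rw [add_sub_cancel_left])).trans (ihr (a + h) b ?_)
    rw [← sub_sub, QuotientAddGroup.mk_sub, hab, add_sub_cancel_left]
  | neg q _ ihq =>
    intro a b hab
    exact (ihq b a (by rw [← neg_sub, QuotientAddGroup.mk_neg, hab, neg_neg])).symm

theorem IsPatternColouring.exists_perm_orbits [Finite X] (hγ : IsPatternColouring F c γ)
    (hσ : ∀ x y, γ s(σ x, σ y) = γ s(x, y))
    (htop : ∀ i, AddSubgroup.closure {q | c i q = 3} = ⊤) :
    ∃ π : Equiv.Perm (Orbits A X), ∀ y, orbitIndex A (σ y) = π (orbitIndex A y) := by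
  let p (i : Orbits A X) : Orbits A X := orbitIndex A (σ (orbitPoint i 0))
  have hp (y : X) : orbitIndex A (σ y) = p (orbitIndex A y) :=
    hγ.orbitIndex_apply_eq hσ (htop _) rfl (orbitIndex_orbitPoint _ 0)
  have hsurj : p.Surjective := fun i =>
    ⟨orbitIndex A (σ.symm (orbitPoint i 0)), by
      rw [← hp, Equiv.apply_symm_apply, orbitIndex_orbitPoint]⟩
  exact ⟨Equiv.ofBijective p (Finite.surjective_iff_bijective.1 hsurj), hp⟩

theorem IsPatternColouring.orbitIndex_apply_of_distinguishesOrbits [Finite A] [Finite X]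
    (hγ : IsPatternColouring F c γ) (hF : DistinguishesOrbits F)
    (hσ : ∀ x y, γ s(σ x, σ y) = γ s(x, y))
    (htop : ∀ i, AddSubgroup.closure {q | c i q = 3} = ⊤) (y : X) :
    orbitIndex A (σ y) = orbitIndex A y := by
  obtain ⟨π, hπ⟩ := hγ.exists_perm_orbits hσ htop
  have hiff (j : Orbits A X) (y : X) : orbitIndex A (σ y) = π j ↔ orbitIndex A y = j := by
    rw [hπ, π.injective.eq_iff]
  have hcard (j : Orbits A X) :
      Nat.card (orbitStabilizer (π j)) = Nat.card (orbitStabilizer j) := by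
    have h := (orbitStabilizer (π j)).index_mul_card.trans (orbitStabilizer j).index_mul_card.symm
    rw [index_orbitStabilizer_eq (hiff j)] at h
    exact Nat.eq_of_mul_eq_mul_left (Nat.pos_of_ne_zero AddSubgroup.index_ne_zero_of_finite) h
  have hone : π = 1 := hF π fun i j hij e => by
    have hx := orbitIndex_orbitPoint i (0 : A)
    rw [← hγ.ncard_cross hij hx, ← hγ.ncard_cross (π.injective.ne hij) ((hiff i _).2 hx), hcard,
      ncard_orbitIndex_eq_and_apply (hiff j)]
    simp only [hσ]
  rw [hπ, hone, Equiv.Perm.one_apply]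

/-- Two orbits of the same size cannot be exchanged: the colours `2` and `3` are swapped on just one
of them, while `3` is more frequent than `2` in `c i` and in `c j`. -/
theorem IsPatternColouring.not_forall_orbitIndex_apply_iff [Finite A]
    {E : (i : Orbits A X) → Set (A ⧸ orbitStabilizer i)}
    (hc : ∀ i, IsRigidColouring (E i) (c i)) {s : Orbits A X → Equiv.Perm (Fin 4)}
    (hi : s i = Equiv.swap 2 3) (hj : s j = 1)
    (hγ : IsPatternColouring F (fun i q => s i (c i q)) γ)
    (hσ : ∀ x y, γ s(σ x, σ y) = γ s(x, y)) (hindex : (orbitStabilizer j).index ≠ 1) :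
    ¬∀ y, orbitIndex A (σ y) = i ↔ orbitIndex A y = j := by
  intro hiff
  have hnontrivial (k : Orbits A X) (hk : (orbitStabilizer k).index ≠ 1) :
      Nontrivial (A ⧸ orbitStabilizer k) :=
    Finite.one_lt_card_iff_nontrivial.1
      (lt_of_le_of_ne (Nat.card_pos (α := A ⧸ orbitStabilizer k)) hk.symm)
  have hlt_i := (hc i).ncard_lt (hnontrivial i (index_orbitStabilizer_eq hiff ▸ hindex))
  have hlt_j := (hc j).ncard_lt (hnontrivial j hindex)
  have hcount (e : Fin 4) : {q | Equiv.swap 2 3 (c i q) = e}.ncard = {q | c j q = e}.ncard := by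
    have hx := orbitIndex_orbitPoint j (0 : A)
    have h_i := hγ.ncard_internal ((hiff _).2 hx) e
    have h_j := hγ.ncard_internal hx e
    simp only [hi, hj, Equiv.Perm.one_apply] at h_i h_j
    rw [← h_i, ← h_j, ncard_orbitIndex_eq_and_apply hiff]
    simp only [hσ]
  have h2 := hcount 2
  have h3 := hcount 3
  simp only [Equiv.swap_apply_eq_iff, Equiv.swap_apply_left, Equiv.swap_apply_right] at h2 h3
  omega

theorem IsPatternColouring.orbitIndex_apply_of_swap [Finite A] [Finite X]
    {E : (i : Orbits A X) → Set (A ⧸ orbitStabilizer i)}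
    (hc : ∀ i, IsRigidColouring (E i) (c i)) {s : Orbits A X → Equiv.Perm (Fin 4)}
    (hi : s i = Equiv.swap 2 3) (hj : s j = 1)
    (hγ : IsPatternColouring F (fun i q => s i (c i q)) γ)
    (hσ : ∀ x y, γ s(σ x, σ y) = γ s(x, y)) (hindex : (orbitStabilizer j).index ≠ 1)
    (hle : (orbitStabilizer i).index ≤ (orbitStabilizer j).index) (hall : ∀ k, k = i ∨ k = j)
    (y : X) : orbitIndex A (σ y) = orbitIndex A y := by
  have hconst (k : Orbits A X) (hk : orbitIndex A (σ (orbitPoint j 0)) = k) (y : X)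
      (hy : orbitIndex A y = j) : orbitIndex A (σ y) = k :=
    (hγ.orbitIndex_apply_eq hσ (by simpa [hj] using (hc j).closure_eq_top) hy
      (orbitIndex_orbitPoint j 0)).trans hk
  rcases hall (orbitIndex A (σ (orbitPoint j 0))) with h | h
  · exact absurd (orbitIndex_apply_eq_iff (hconst i h) hle)
      (hγ.not_forall_orbitIndex_apply_iff hc hi hj hσ hindex)
  · have hiff := orbitIndex_apply_eq_iff (hconst j h) le_rfl y
    rcases hall (orbitIndex A y) with hy | hy
    · rcases hall (orbitIndex A (σ y)) with hy' | hy'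
      · rw [hy, hy']
      · rw [hy', hiff.1 hy']
    · rw [hy, hiff.2 hy]

end OrbitPermutations

section NonIsolated

variable {A X : Type*} [AddCommGroup A] [AddAction A X]

/-- Two points, both of which are fixed by `A`. -/
def IsTrivialPair (A X : Type*) [AddCommGroup A] [AddAction A X] : Prop :=
  Nat.card X = 2 ∧ ∀ (a : A) (x : X), a +ᵥ x = x

theorem isTrivialPair_of_orbitStabilizer_eq_top (hX : Nat.card (Orbits A X) = 2)
    (hK : ∀ i : Orbits A X, orbitStabilizer i = ⊤) : IsTrivialPair A X := by
  have hfix (a : A) (x : X) : a +ᵥ x = x := by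
    obtain ⟨i, b, rfl⟩ := exists_exists_orbitPoint_eq (A := A) x
    rw [vadd_orbitPoint, orbitPoint_eq_iff, hK]
    exact AddSubgroup.mem_top _
  refine ⟨hX ▸ Nat.card_congr (Equiv.ofBijective (orbitIndex A) ⟨fun x y hxy => ?_, fun i =>
    ⟨_, orbitIndex_orbitPoint i 0⟩⟩), hfix⟩
  obtain ⟨a, ha⟩ := AddAction.orbitRel_apply.1 (Quotient.eq''.1 hxy)
  exact ha.symm.trans (hfix a y)

theorem hasFourColouring_of_orbitIndex_apply_eq (hcl : IsPairClosed A X)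
    {F : Orbits A X → Orbits A X → A → Fin 3} (hF : IsCrossPattern orbitStabilizer F)
    {E : (i : Orbits A X) → Set (A ⧸ orbitStabilizer i)}
    {c : (i : Orbits A X) → A ⧸ orbitStabilizer i → Fin 4}
    (hc : ∀ i, IsInternalColouring orbitStabilizer F i (E i) (c i))
    (s : Orbits A X → Equiv.Perm (Fin 4)) (hs : ∀ i, s i 0 = 0)
    (horbit : ∀ γ, IsPatternColouring F (fun i q => s i (c i q)) γ → ∀ σ : Equiv.Perm X,
      (∀ x y, γ s(σ x, σ y) = γ s(x, y)) → ∀ y, orbitIndex A (σ y) = orbitIndex A y) :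
    HasFourColouring A X := by
  obtain ⟨γ, hγ⟩ := hF.exists_isPatternColouring (c := fun i q => s i (c i q))
    fun i q => by rw [(hc i).even]
  refine ⟨γ, fun σ => ⟨?_, fun hσ => ?_⟩⟩
  · rintro ⟨g, hg⟩ x y -
    rw [← hg, ← hg, hγ.apply_vadd]
  · have hdiag (x : X) : γ s(x, x) = 0 := by
      obtain ⟨i, a, rfl⟩ := exists_exists_orbitPoint_eq (A := A) x
      rw [hγ.internal, sub_self, QuotientAddGroup.mk_zero, (hc i).zero, hs]
    have hσ' (x y : X) : γ s(σ x, σ y) = γ s(x, y) := by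
      by_cases hxy : x = y
      · rw [hxy, hdiag, hdiag]
      · exact hσ x y hxy
    exact hγ.exists_vadd_eq hcl hF hc hσ' (horbit γ hγ σ hσ')

theorem exists_pair_of_natCard_eq_two {ι : Type*} (h : Nat.card ι = 2) (N : ι → ℕ) :
    ∃ i j, i ≠ j ∧ (∀ k, k = i ∨ k = j) ∧ N i ≤ N j := by
  obtain ⟨i, j, hij, huniv⟩ := Nat.card_eq_two_iff.1 h
  have hall (k : ι) : k = i ∨ k = j := by simpa using Set.ext_iff.1 huniv k
  rcases le_total (N i) (N j) with hle | hle
  · exact ⟨i, j, hij, hall, hle⟩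
  · exact ⟨j, i, hij.symm, fun k => (hall k).symm, hle⟩

theorem hasFourColouring_of_forall_sup_ne_top [Finite A] [Finite X] (hcl : IsPairClosed A X)
    (hX : ¬IsTrivialPair A X)
    (h2 : ∀ i : Orbits A X, IsElementaryPlane 2 (A ⧸ orbitStabilizer i) →
      ∃ j, j ≠ i ∧ orbitStabilizer i ⊔ orbitStabilizer j ≠ ⊤) : HasFourColouring A X := by
  classical
  obtain ⟨F, hF, hdist⟩ := exists_isCrossPattern (orbitStabilizer (A := A) (X := X))
  choose E c hc using fun i => hF.exists_isInternalColouring (i := i) fun p hp h => by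
    rcases hp with rfl | rfl
    · exact h2 i h
    · exact hcl.exists_sup_ne_top h
  obtain h3 | h1 | hcard : 3 ≤ Nat.card (Orbits A X) ∨ Nat.card (Orbits A X) ≤ 1 ∨
      Nat.card (Orbits A X) = 2 := by omega
  · exact hasFourColouring_of_orbitIndex_apply_eq hcl hF hc 1 (fun _ => rfl) fun γ hγ σ hσ =>
      hγ.orbitIndex_apply_of_distinguishesOrbits (hdist h3) hσ fun i => (hc i).closure_eq_top
  · have := Finite.card_le_one_iff_subsingleton.1 h1
    exact hasFourColouring_of_orbitIndex_apply_eq hcl hF hc 1 (fun _ => rfl) fun _ _ _ _ _ =>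
      Subsingleton.elim _ _
  · obtain ⟨i, j, hij, hall, hle⟩ := exists_pair_of_natCard_eq_two hcard
      fun i : Orbits A X => (orbitStabilizer i).index
    have hindex : (orbitStabilizer j).index ≠ 1 := fun hj => by
      have hi : (orbitStabilizer i).index ≠ 0 := AddSubgroup.index_ne_zero_of_finite
      refine hX (isTrivialPair_of_orbitStabilizer_eq_top hcard fun k => ?_)
      rw [← AddSubgroup.index_eq_one]
      rcases hall k with rfl | rfl <;> omega
    refine hasFourColouring_of_orbitIndex_apply_eq hcl hF hc
      (Function.update 1 i (Equiv.swap 2 3)) (fun k => ?_) fun γ hγ σ hσ =>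
      hγ.orbitIndex_apply_of_swap (fun i => (hc i).toIsRigidColouring) (Function.update_self ..)
        (Function.update_of_ne hij.symm ..) hσ hindex hle hall
    rcases eq_or_ne k i with rfl | hk
    · rw [Function.update_self]
      decide
    · rw [Function.update_of_ne hk, Pi.one_apply, Equiv.Perm.one_apply]

end NonIsolated

section RainbowModules

variable {X Y : Type*} {γ : Sym2 X → Fin 4} {γ' : Sym2 Y → Fin 4} {p : Fin 4} {C : Set X}

/-- A set of points joined to all the other points by the colour `p`, and within which the edges at
each point have distinct colours, all different from `p`. -/
structure IsRainbowModule (γ : Sym2 X → Fin 4) (p : Fin 4) (C : Set X) : Prop where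
  mem_iff : ∀ x ∈ C, ∀ y, y ∈ C ↔ y = x ∨ γ s(x, y) ≠ p
  injOn : ∀ x ∈ C, (C \ {x}).InjOn fun y => γ s(x, y)

theorem IsRainbowModule.preimage (hC : IsRainbowModule γ p C) {f : Y → X} (hf : f.Injective)
    (hγ : ∀ y z, y ≠ z → γ s(f y, f z) = γ' s(y, z)) : IsRainbowModule γ' p (f ⁻¹' C) where
  mem_iff x hx y := by
    rw [Set.mem_preimage, hC.mem_iff _ hx, hf.eq_iff]
    refine or_congr_right' fun hxy => ?_
    rw [hγ _ _ (Ne.symm hxy)]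
  injOn x hx y hy z hz hyz := by
    refine hf (hC.injOn (f x) hx ⟨hy.1, hf.ne hy.2⟩ ⟨hz.1, hf.ne hz.2⟩ ?_)
    dsimp only at hyz ⊢
    rwa [hγ _ _ (Ne.symm hy.2), hγ _ _ (Ne.symm hz.2)]

theorem IsRainbowModule.eq_of_mem {D : Set X} (hC : IsRainbowModule γ p C)
    (hD : IsRainbowModule γ p D) {x : X} (hxC : x ∈ C) (hxD : x ∈ D) : C = D :=
  Set.ext fun y => (hC.mem_iff x hxC y).trans (hD.mem_iff x hxD y).symm

theorem IsRainbowModule.eq_of_ncard_eq {r : Fin 4} {D : Set X} (hC : IsRainbowModule γ p C)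
    (hD : IsRainbowModule γ r D) (hpr : p ≠ r) (hfin : C.Finite) (hfin' : D.Finite)
    (h : C.ncard = D.ncard) : C = D := by
  by_contra hne
  obtain ⟨x, hxC, hxD⟩ := Set.not_subset.1 fun hs =>
    hne (Set.eq_of_subset_of_ncard_le hs h.ge hfin')
  obtain ⟨y, hyD, hyC⟩ := Set.not_subset.1 fun hs =>
    hne (Set.eq_of_subset_of_ncard_le hs h.le hfin).symm
  have hp : γ s(x, y) = p := not_not.1 fun h' => hyC ((hC.mem_iff x hxC y).2 (.inr h'))
  have hr : γ s(y, x) = r := not_not.1 fun h' => hxD ((hD.mem_iff y hyD x).2 (.inr h'))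
  exact hpr (hp.symm.trans ((congrArg γ Sym2.eq_swap).trans hr))

/-- The edges at a point of a module for two colours avoid both of them. -/
theorem IsRainbowModule.ncard_le_three {r : Fin 4} (hp : IsRainbowModule γ p C)
    (hr : IsRainbowModule γ r C) (hpr : p ≠ r) : C.ncard ≤ 3 := by
  obtain rfl | ⟨x, hx⟩ := C.eq_empty_or_nonempty
  · simp
  have hmaps : ∀ y ∈ C \ {x}, γ s(x, y) ∈ (↑({p, r}ᶜ : Finset (Fin 4)) : Set (Fin 4)) := by
    rintro y ⟨hy, hyx⟩
    simp [((hp.mem_iff x hx y).1 hy).resolve_left hyx, ((hr.mem_iff x hx y).1 hy).resolve_left hyx]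
  have hle := Set.ncard_le_ncard_of_injOn _ hmaps (hp.injOn x hx)
  rw [Set.ncard_coe_finset, Finset.card_compl, Finset.card_pair hpr] at hle
  rw [Fintype.card_fin] at hle
  have hC := Set.ncard_le_ncard_sdiff_add_ncard C {x}
  rw [Set.ncard_singleton] at hC
  omega

theorem IsRainbowModule.eq_univ {r : Fin 4} (hp : IsRainbowModule γ p C)
    (hr : IsRainbowModule γ r C) (hpr : p ≠ r) (hC : C.Nonempty) : C = Set.univ := by
  obtain ⟨x, hx⟩ := hC
  refine Set.eq_univ_of_forall fun y => by_contra fun hy => hpr ?_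
  have h1 := fun h => hy ((hp.mem_iff x hx y).2 (.inr h))
  have h2 := fun h => hy ((hr.mem_iff x hx y).2 (.inr h))
  exact (not_not.1 h1).symm.trans (not_not.1 h2)

theorem exists_forall_isRainbowModule_ncard_ne (γ : Sym2 X → Fin 4) {n : ℕ}
    (hn : n = 4 ∨ n = 1 ∧ Nontrivial X) :
    ∃ p, ∀ C, IsRainbowModule γ p C → C.ncard ≠ n := by
  by_contra! h
  obtain ⟨C, hC, hCn⟩ := h 0
  obtain ⟨D, hD, hDn⟩ := h 1
  have hC0 : C.ncard ≠ 0 := by omega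
  have hD0 : D.ncard ≠ 0 := by omega
  obtain rfl := hC.eq_of_ncard_eq hD (by decide) (Set.finite_of_ncard_ne_zero hC0)
    (Set.finite_of_ncard_ne_zero hD0) (hCn.trans hDn.symm)
  have hle := hC.ncard_le_three hD (by decide)
  obtain ⟨h1, hX⟩ : n = 1 ∧ Nontrivial X := hn.resolve_left (by omega)
  rw [hC.eq_univ hD (by decide) (Set.nonempty_of_ncard_ne_zero hC0), h1, Set.ncard_univ] at hCn
  exact absurd (Nat.card_eq_one_iff_unique.1 hCn).1 (not_subsingleton X)

end RainbowModules

section IsolatedOrbits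

variable {A X : Type*} [AddCommGroup A] [AddAction A X] {o : X}

theorem vadd_mem_orbit_iff {g : A} {x : X} :
    g +ᵥ x ∈ AddAction.orbit A o ↔ x ∈ AddAction.orbit A o := by
  rw [← AddAction.orbit_eq_iff, AddAction.orbit_vadd, AddAction.orbit_eq_iff]

variable (A) in
/-- The points outside the orbit of `o`. -/
def orbitCompl (o : X) : SubAddAction A X where
  carrier := (AddAction.orbit A o)ᶜ
  vadd_mem' _ _ hx h := hx (vadd_mem_orbit_iff.1 h)

variable (A) in
/-- The orbit of `o` can be moved independently of any other orbit. -/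
def IsIsolated (o : X) : Prop :=
  ∀ y ∉ AddAction.orbit A o, AddAction.stabilizer A o ⊔ AddAction.stabilizer A y = ⊤

theorem IsIsolated.exists_vadd_eq (ho : IsIsolated A o) {x y : X} (hx : x ∈ AddAction.orbit A o)
    (hy : y ∉ AddAction.orbit A o) (g h : A) : ∃ k : A, k +ᵥ x = g +ᵥ x ∧ k +ᵥ y = h +ᵥ y := by
  obtain ⟨a, rfl⟩ := hx
  obtain ⟨u, hu, v, hv, huv⟩ := AddSubgroup.mem_sup.1 (ho y hy ▸ AddSubgroup.mem_top (h - g))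
  rw [AddAction.mem_stabilizer_iff] at hu hv
  refine ⟨g + u, ?_, ?_⟩
  · dsimp only
    rw [add_vadd, vadd_comm u a, hu]
  · have hgu : g + u = h + -v := by rw [← sub_eq_add_neg, eq_sub_iff_add_eq, add_assoc, huv,
      add_sub_cancel]
    rw [hgu, add_vadd, neg_vadd_eq_iff.2 hv.symm]

theorem IsPairClosed.exists_vadd_eq_of_isIsolated (hcl : IsPairClosed A X) (ho : IsIsolated A o)
    {σ : Equiv.Perm X} (t : A) (ht : ∀ x ∈ AddAction.orbit A o, t +ᵥ x = σ x)
    (hσ : ∀ y ∉ AddAction.orbit A o, ∀ z ∉ AddAction.orbit A o,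
      ∃ a : A, s(a +ᵥ y, a +ᵥ z) = s(σ y, σ z)) : ∃ g : A, ∀ x, g +ᵥ x = σ x := by
  have hmix (x : X) (hx : x ∈ AddAction.orbit A o) (y : X) (hy : y ∉ AddAction.orbit A o) :
      ∃ a : A, a +ᵥ x = σ x ∧ a +ᵥ y = σ y := by
    obtain ⟨h, hh⟩ := hσ y hy y hy
    obtain ⟨k, hkx, hky⟩ := ho.exists_vadd_eq hx hy t h
    exact ⟨k, hkx.trans (ht x hx), hky.trans (Sym2.diag_injective hh)⟩
  refine hcl σ fun x y => ?_
  by_cases hx : x ∈ AddAction.orbit A o <;> by_cases hy : y ∈ AddAction.orbit A o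
  · exact ⟨t, by rw [ht x hx, ht y hy]⟩
  · obtain ⟨a, hax, hay⟩ := hmix x hx y hy
    exact ⟨a, by rw [hax, hay]⟩
  · obtain ⟨a, hay, hax⟩ := hmix y hy x hx
    exact ⟨a, by rw [hax, hay]⟩
  · exact hσ x hx y hy

theorem IsPairClosed.orbitCompl (hcl : IsPairClosed A X) (ho : IsIsolated A o) :
    IsPairClosed A (orbitCompl A o) := by
  classical
  intro τ hτ
  obtain ⟨g, hg⟩ := hcl.exists_vadd_eq_of_isIsolated ho (σ := Equiv.Perm.ofSubtype τ) 0
    (fun x hx => by rw [zero_vadd, Equiv.Perm.ofSubtype_apply_of_not_mem τ (not_not.2 hx)])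
    (fun y hy z hz => by
      obtain ⟨a, ha⟩ := hτ ⟨y, hy⟩ ⟨z, hz⟩
      refine ⟨a, ?_⟩
      rw [Equiv.Perm.ofSubtype_apply_of_mem τ hy, Equiv.Perm.ofSubtype_apply_of_mem τ hz]
      exact congrArg (Sym2.map Subtype.val) ha)
  exact ⟨g, fun y => Subtype.ext ((hg y).trans (Equiv.Perm.ofSubtype_apply_coe τ y))⟩

/-- The colouring `γ` extends `γ'` by an invariant rainbow module on the orbit of `o`. -/
structure IsRainbowExtension (p : Fin 4) (γ' : Sym2 (orbitCompl A o) → Fin 4)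
    (γ : Sym2 X → Fin 4) : Prop where
  isRainbowModule : IsRainbowModule γ p (AddAction.orbit A o)
  apply_vadd : ∀ g : A, ∀ x ∈ AddAction.orbit A o, ∀ y ∈ AddAction.orbit A o,
    γ s(g +ᵥ x, g +ᵥ y) = γ s(x, y)
  apply_coe : ∀ y z : orbitCompl A o, γ s((y : X), (z : X)) = γ' s(y, z)

theorem exists_injective_apply_zero_eq {B : Type*} [Zero B] [Finite B] (hB : Nat.card B ≤ 4)
    (p : Fin 4) : ∃ c : B → Fin 4, c.Injective ∧ c 0 = p := by
  obtain ⟨e⟩ : Nonempty (B ↪ Fin 4) := by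
    have := Fintype.ofFinite B
    exact Function.Embedding.nonempty_of_card_le (by simpa [Nat.card_eq_fintype_card] using hB)
  exact ⟨fun b => Equiv.swap (e 0) p (e b), (Equiv.injective _).comp e.injective,
    Equiv.swap_apply_left _ _⟩

variable (A o) in
theorem exists_injOn_orbit_apply_vadd : ∃ e : X → A ⧸ AddAction.stabilizer A o,
    Set.InjOn e (AddAction.orbit A o) ∧
      ∀ (g : A), ∀ x ∈ AddAction.orbit A o, e (g +ᵥ x) = g + e x := by
  obtain ⟨e, he⟩ := (AddAction.injective_ofQuotientStabilizer A o).hasLeftInverse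
  replace he (a : A) : e (a +ᵥ o) = a := he a
  refine ⟨e, ?_, ?_⟩
  · rintro _ ⟨a, rfl⟩ _ ⟨b, rfl⟩ hab
    exact congrArg (AddAction.ofQuotientStabilizer A o) ((he a).symm.trans (hab.trans (he b)))
  · rintro g _ ⟨a, rfl⟩
    dsimp only
    rw [← add_vadd, he, he, QuotientAddGroup.mk_add]

theorem exists_isRainbowExtension (h2 : ∀ q : A ⧸ AddAction.stabilizer A o, -q = q)
    [Finite (A ⧸ AddAction.stabilizer A o)] (h4 : (AddAction.stabilizer A o).index ≤ 4) (p : Fin 4)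
    (γ' : Sym2 (orbitCompl A o) → Fin 4) : ∃ γ, IsRainbowExtension p γ' γ := by
  classical
  obtain ⟨c, hc, hc0⟩ := exists_injective_apply_zero_eq h4 p
  obtain ⟨e, hinj, he⟩ := exists_injOn_orbit_apply_vadd A o
  let G (x y : X) : Fin 4 :=
    if hx : x ∈ orbitCompl A o then if hy : y ∈ orbitCompl A o then γ' s(⟨x, hx⟩, ⟨y, hy⟩) else p
    else if y ∈ orbitCompl A o then p else c (e y - e x)
  have hG (x y : X) : G x y = G y x := by
    dsimp only [G]
    split_ifs
    · rw [Sym2.eq_swap]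
    · rfl
    · rfl
    · rw [← neg_sub, h2]
  have horbit {x y : X} (hx : x ∈ AddAction.orbit A o) (hy : y ∈ AddAction.orbit A o) :
      G x y = c (e y - e x) :=
    (dif_neg (not_not.2 hx)).trans (if_neg (not_not.2 hy))
  have hcross {x y : X} (hx : x ∈ AddAction.orbit A o) (hy : y ∉ AddAction.orbit A o) :
      G x y = p :=
    (dif_neg (not_not.2 hx)).trans (if_pos hy)
  refine ⟨Sym2.lift ⟨G, hG⟩, ⟨fun x hx y => ?_, ?_⟩, ?_, ?_⟩
  · rw [Sym2.lift_mk]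
    by_cases hy : y ∈ AddAction.orbit A o
    · have hyx : e y - e x = 0 ↔ y = x :=
        sub_eq_zero.trans ⟨fun h => hinj hy hx h, fun h => congrArg e h⟩
      dsimp only
      rw [horbit hx hy, ← hc0, hc.ne_iff, Ne, hyx]
      exact iff_of_true hy (em _)
    · have hne : y ≠ x := fun h => hy (h ▸ hx)
      exact iff_of_false hy (not_or.2 ⟨hne, not_not.2 (hcross hx hy)⟩)
  · rintro x hx y ⟨hy, -⟩ z ⟨hz, -⟩ hyz
    simp only [Sym2.lift_mk, horbit hx hy, horbit hx hz] at hyz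
    exact hinj hy hz (sub_left_injective (hc hyz))
  · intro g x hx y hy
    simp only [Sym2.lift_mk]
    rw [horbit (vadd_mem_orbit_iff.2 hx) (vadd_mem_orbit_iff.2 hy), horbit hx hy, he g x hx,
      he g y hy, add_sub_add_left_eq_sub]
  · exact fun y z => (dif_pos y.2).trans (dif_pos z.2)

theorem IsRainbowExtension.apply_vadd_vadd {p : Fin 4} {γ' : Sym2 (orbitCompl A o) → Fin 4}
    {γ : Sym2 X → Fin 4} (hγ : IsRainbowExtension p γ' γ)
    (hγ' : ∀ (g : A) (y z), y ≠ z → γ' s(g +ᵥ y, g +ᵥ z) = γ' s(y, z)) (g : A) {x y : X}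
    (hxy : x ≠ y) : γ s(g +ᵥ x, g +ᵥ y) = γ s(x, y) := by
  have hcross {x y : X} (hx : x ∈ AddAction.orbit A o) (hy : y ∉ AddAction.orbit A o) :
      γ s(x, y) = p :=
    not_not.1 fun h => hy ((hγ.isRainbowModule.mem_iff x hx y).2 (.inr h))
  have hvadd {x : X} := vadd_mem_orbit_iff (o := o) (g := g) (x := x)
  by_cases hx : x ∈ AddAction.orbit A o <;> by_cases hy : y ∈ AddAction.orbit A o
  · exact hγ.apply_vadd g x hx y hy
  · rw [hcross hx hy, hcross (hvadd.2 hx) (mt hvadd.1 hy)]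
  · rw [Sym2.eq_swap, hcross (hvadd.2 hy) (mt hvadd.1 hx), Sym2.eq_swap, hcross hy hx]
  · have h := hγ' g ⟨x, hx⟩ ⟨y, hy⟩ fun h => hxy (congrArg Subtype.val h)
    rwa [← hγ.apply_coe, ← hγ.apply_coe] at h

theorem IsRainbowExtension.exists_vadd_eq {p : Fin 4} {γ' : Sym2 (orbitCompl A o) → Fin 4}
    {γ : Sym2 X → Fin 4} (hγ : IsRainbowExtension p γ' γ) {σ : Equiv.Perm X}
    (hσ : ∀ x y, x ≠ y → γ s(σ x, σ y) = γ s(x, y)) (ho : σ o ∈ AddAction.orbit A o) :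
    ∃ t : A, ∀ x ∈ AddAction.orbit A o, σ x ∈ AddAction.orbit A o → t +ᵥ x = σ x := by
  obtain ⟨t, ht⟩ := ho
  dsimp only at ht
  have hoo := AddAction.mem_orbit_self (M := A) o
  refine ⟨t, fun x hx hx' => ?_⟩
  obtain rfl | hne := eq_or_ne x o
  · exact ht
  refine hγ.isRainbowModule.injOn (t +ᵥ o) (vadd_mem_orbit_iff.2 hoo)
    ⟨vadd_mem_orbit_iff.2 hx, (AddAction.injective t).ne hne⟩
    ⟨hx', fun h => hne (σ.injective (h.trans ht))⟩ ?_
  dsimp only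
  rw [hγ.apply_vadd t o hoo x hx, ht, hσ o x hne.symm]

theorem IsRainbowExtension.apply_mem_orbit_iff {p : Fin 4} {γ' : Sym2 (orbitCompl A o) → Fin 4}
    {γ : Sym2 X → Fin 4} (hγ : IsRainbowExtension p γ' γ)
    (hp : ∀ C, IsRainbowModule γ' p C → C.ncard ≠ (AddAction.stabilizer A o).index)
    {σ : Equiv.Perm X} (hσ : ∀ x y, x ≠ y → γ s(σ x, σ y) = γ s(x, y)) (x : X) :
    σ x ∈ AddAction.orbit A o ↔ x ∈ AddAction.orbit A o := by
  have hmod := hγ.isRainbowModule.preimage σ.injective hσ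
  suffices h : ∃ y, y ∈ σ ⁻¹' AddAction.orbit A o ∧ y ∈ AddAction.orbit A o by
    obtain ⟨y, hyσ, hy⟩ := h
    exact Set.ext_iff.1 (hmod.eq_of_mem hγ.isRainbowModule hyσ hy) x
  by_contra! hdisj
  refine hp _ (hmod.preimage Subtype.val_injective fun y z _ => hγ.apply_coe y z) ?_
  rw [Set.ncard_preimage_of_injective_subset_range Subtype.val_injective,
    Set.ncard_preimage_of_injective_subset_range σ.injective, AddAction.index_stabilizer]
  · rw [σ.surjective.range_eq]
    exact Set.subset_univ _
  · exact fun y hy => ⟨⟨y, hdisj y hy⟩, rfl⟩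

/-- Gluing an isolated orbit to a graph with four colours: the colour `p` joining the two parts is
chosen so that no rainbow module of the graph could be exchanged with the orbit. -/
theorem HasFourColouring.of_orbitCompl (hY : HasFourColouring A (orbitCompl A o))
    (hcl : IsPairClosed A X) (ho : IsIsolated A o)
    (h2 : ∀ q : A ⧸ AddAction.stabilizer A o, -q = q)
    (h4 : (AddAction.stabilizer A o).index = 4 ∨
      (AddAction.stabilizer A o).index = 1 ∧ Nontrivial (orbitCompl A o)) :
    HasFourColouring A X := by
  obtain ⟨γ', hγ'⟩ := hY
  obtain ⟨p, hp⟩ := exists_forall_isRainbowModule_ncard_ne γ' h4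
  have : (AddAction.stabilizer A o).FiniteIndex := ⟨by omega⟩
  have : Finite (A ⧸ AddAction.stabilizer A o) :=
    AddSubgroup.finite_quotient_of_finiteIndex (H := AddAction.stabilizer A o)
  obtain ⟨γ, hγ⟩ := exists_isRainbowExtension h2 (by omega) p γ'
  refine ⟨γ, fun σ => ⟨?_, fun hσ => ?_⟩⟩
  · rintro ⟨g, hg⟩ x y hxy
    rw [← hg, ← hg]
    exact hγ.apply_vadd_vadd (fun g => (hγ' (AddAction.toPerm g)).1 ⟨g, fun _ => rfl⟩) g hxy
  have hmem := hγ.apply_mem_orbit_iff hp hσ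
  obtain ⟨t, ht⟩ := hγ.exists_vadd_eq hσ ((hmem o).2 (AddAction.mem_orbit_self o))
  obtain ⟨h, hh⟩ := (hγ' (σ.subtypePerm fun x => not_congr (hmem x))).2 fun y z hyz => by
    rw [← hγ.apply_coe, ← hγ.apply_coe]
    exact hσ y z (Subtype.val_injective.ne hyz)
  have hh' (y : X) (hy : y ∉ AddAction.orbit A o) : h +ᵥ y = σ y :=
    congrArg Subtype.val (hh ⟨y, hy⟩)
  exact hcl.exists_vadd_eq_of_isIsolated ho t (fun x hx => ht x hx ((hmem x).2 hx))
    fun y hy z hz => ⟨h, by rw [hh' y hy, hh' z hz]⟩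

end IsolatedOrbits

section Main

variable {A : Type*} [AddCommGroup A]

theorem IsElementaryPlane.neg_eq {B : Type*} [AddCommGroup B] (hB : IsElementaryPlane 2 B) (b : B) :
    -b = b :=
  neg_eq_of_add_eq_zero_left (by rw [← two_nsmul, hB.nsmul_eq_zero])

theorem isIsolated_out {X : Type*} [AddAction A X] {i : Orbits A X}
    (hi : ∀ j, j ≠ i → orbitStabilizer i ⊔ orbitStabilizer j = ⊤) : IsIsolated A i.out := by
  intro y hy
  obtain ⟨j, b, rfl⟩ := exists_exists_orbitPoint_eq (A := A) y
  have hji : j ≠ i := fun h => hy ⟨b, by rw [h]; rfl⟩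
  have hj : AddAction.stabilizer A (orbitPoint j b) = orbitStabilizer j :=
    AddSubgroup.ext fun g => by
      rw [AddAction.mem_stabilizer_iff, vadd_orbitPoint, eq_comm, orbitPoint_eq_iff,
        add_sub_cancel_right]
  rw [hj]
  exact hi j hji

theorem isIsolated_of_forall_vadd_eq {X : Type*} [AddAction A X] {y : X}
    (hy : ∀ a : A, a +ᵥ y = y) : IsIsolated A y := fun x _ => by
  rw [(eq_top_iff.2 fun a _ => hy a : AddAction.stabilizer A y = ⊤), top_sup_eq]

theorem HasFourColouring.of_orbitCompl_of_forall_vadd_eq {X : Type*} [AddAction A X] {y : X}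
    (hY : HasFourColouring A (orbitCompl A y)) (hcl : IsPairClosed A X)
    (hy : ∀ a : A, a +ᵥ y = y) (hX : Nontrivial (orbitCompl A y)) : HasFourColouring A X := by
  have htop : AddAction.stabilizer A y = ⊤ := eq_top_iff.2 fun a _ => hy a
  have := QuotientAddGroup.subsingleton_iff.2 htop
  exact hY.of_orbitCompl hcl (isIsolated_of_forall_vadd_eq hy) (fun _ => Subsingleton.elim _ _)
    (.inr ⟨AddSubgroup.index_eq_one.2 htop, hX⟩)

theorem IsTrivialPair.exists_forall_vadd_eq {X : Type*} [AddAction A X] {o : X}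
    (h : IsTrivialPair A (orbitCompl A o)) (ho : AddAction.stabilizer A o ≠ ⊤) :
    ∃ y : X, (∀ a : A, a +ᵥ y = y) ∧ Nontrivial (orbitCompl A y) ∧
      ¬IsTrivialPair A (orbitCompl A y) := by
  obtain ⟨⟨y, hyo⟩, -⟩ := Nat.card_eq_two_iff.1 h.1
  have hy (a : A) : a +ᵥ y = y := congrArg Subtype.val (h.2 a ⟨y, hyo⟩)
  obtain ⟨a, -, ha⟩ := SetLike.exists_of_lt ho.lt_top
  have hmem (b : A) : b +ᵥ o ∈ orbitCompl A y := by
    rintro ⟨c, hc⟩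
    exact hyo ⟨b, hc.symm.trans (hy c)⟩
  have hoy : o ∈ orbitCompl A y := zero_vadd A o ▸ hmem 0
  exact ⟨y, hy, ⟨⟨a +ᵥ o, hmem a⟩, ⟨o, hoy⟩, fun h => ha (congrArg Subtype.val h)⟩,
    fun h => ha (congrArg Subtype.val (h.2 a ⟨o, hoy⟩))⟩

/-- Without an isolated orbit with group `ℤ₂²`, the patterns between the orbits suffice. Such an
orbit is removed, unless this leaves two fixed points; then one of these is removed instead. -/
theorem hasFourColouring_of_not_isTrivialPair [Finite A] {X : Type*} [AddAction A X] [Finite X]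
    (hcl : IsPairClosed A X) (hX : ¬IsTrivialPair A X) : HasFourColouring A X := by
  induction hn : Nat.card X using Nat.strong_induction_on generalizing X with
  | _ n ih =>
    have hcard (o : X) : Nat.card (orbitCompl A o) < n :=
      hn ▸ Finite.card_subtype_lt (x := o) (not_not.2 (AddAction.mem_orbit_self o))
    by_contra hcol
    have hiso := mt (hasFourColouring_of_forall_sup_ne_top hcl hX) hcol
    push Not at hiso
    obtain ⟨i, hplane, hi⟩ := hiso
    have hindex : (AddAction.stabilizer A i.out).index = 4 := hplane.card_eq
    by_cases hpair : IsTrivialPair A (orbitCompl A i.out)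
    · obtain ⟨y, hy, hnontrivial, hY⟩ := hpair.exists_forall_vadd_eq fun htop => by
        rw [htop, AddSubgroup.index_top] at hindex
        omega
      have hcl' := hcl.orbitCompl (isIsolated_of_forall_vadd_eq hy)
      exact hcol ((ih _ (hcard y) hcl' hY rfl).of_orbitCompl_of_forall_vadd_eq hcl hy hnontrivial)
    · have ho := isIsolated_out hi
      exact hcol ((ih _ (hcard _) (hcl.orbitCompl ho) hpair rfl).of_orbitCompl hcl ho
        hplane.neg_eq (.inl hindex))

end Main

section AutomorphismGroups

variable {X κ : Type*} {γ : Sym2 X → κ}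

theorem IsAutColouring.isPairClosed {A : Type*} [AddCommGroup A] [AddAction A X]
    (hγ : IsAutColouring A γ) : IsPairClosed A X := fun σ hσ => by
  refine (hγ σ).2 fun x y hxy => ?_
  obtain ⟨a, ha⟩ := hσ x y
  rw [← ha]
  exact (hγ (AddAction.toPerm a)).1 ⟨a, fun _ => rfl⟩ x y hxy

theorem IsAutColouring.not_isTrivialPair {A : Type*} [AddCommGroup A] [AddAction A X]
    (hγ : IsAutColouring A γ) : ¬IsTrivialPair A X := by
  classical
  rintro ⟨hX, hfix⟩
  obtain ⟨x, y, hxy, huniv⟩ := Nat.card_eq_two_iff.1 hX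
  have hall (z : X) : z = x ∨ z = y := by
    simpa only [Set.mem_insert_iff, Set.mem_singleton_iff] using huniv.ge (Set.mem_univ z)
  obtain ⟨a, ha⟩ := (hγ (Equiv.swap x y)).2 fun u v huv => by
    rcases hall u with rfl | rfl <;> rcases hall v with rfl | rfl
    · exact absurd rfl huv
    · rw [Equiv.swap_apply_left, Equiv.swap_apply_right, Sym2.eq_swap]
    · rw [Equiv.swap_apply_left, Equiv.swap_apply_right, Sym2.eq_swap]
    · exact absurd rfl huv
  exact hxy ((hfix a x).symm.trans ((ha x).trans (Equiv.swap_apply_left x y)))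

open scoped IsMulCommutative in
theorem isAutColouring_additive_iff {k : ℕ} {γ : Sym2 X → Fin k} {A : Subgroup (Equiv.Perm X)}
    [IsMulCommutative A] : IsAutColouring (Additive A) γ ↔ IsColGraphAutGroup γ A := by
  refine forall_congr' fun σ => iff_congr ⟨?_, fun hσ => ?_⟩ Iff.rfl
  · rintro ⟨a, ha⟩
    exact Equiv.ext ha ▸ a.toMul.2
  · exact ⟨.ofMul ⟨σ, hσ⟩, fun _ => rfl⟩

end AutomorphismGroups

end ColouredGraph

/-- An abelian subgroup `A ≤ Sym(X)` is the automorphism group of some coloured graph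
on `X` iff it is the automorphism group of some 4-coloured graph on `X`. -/
theorem statement1 (X : Type*) [Fintype X] (A : Subgroup (Equiv.Perm X))
    (hab : ∀ a ∈ A, ∀ b ∈ A, a * b = b * a) :
    InGR A ↔ InGR4 A := by
  have : IsMulCommutative A := ⟨⟨fun a b => Subtype.ext (hab a a.2 b b.2)⟩⟩
  refine ⟨?_, fun ⟨γ, hγ⟩ => ⟨4, by decide, γ, hγ⟩⟩
  rintro ⟨k, -, γ, hγ⟩
  open scoped IsMulCommutative in
  have hγ' : ColouredGraph.IsAutColouring (Additive A) γ :=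
    ColouredGraph.isAutColouring_additive_iff.2 hγ
  obtain ⟨δ, hδ⟩ := ColouredGraph.hasFourColouring_of_not_isTrivialPair hγ'.isPairClosed
    hγ'.not_isTrivialPair
  exact ⟨δ, ColouredGraph.isAutColouring_additive_iff.1 hδ⟩
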